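/- arXiv:1410.4315 — 4 statements merged into one kernel-verified Lean document; each statement's English description precedes it below -/
import Mathlib

section
/- Let p ∈ (1,∞). For every constant c ≥ 0 there exists a constant C_{p,c} > 0 such that for all n ∈ ℕ and all shifts σ ∈ {0,1}^n with |2a_n − n| ≤ c√n (where a_n = #{j : σ_j = 0}), the L_p-discrepancy of the two-dimensional digit shifted Hammersley point set with N = 2^n points satisfies L_{p,N}(R_{n,σ}) ≤ C_{p,c} · √(log N)/N. -/
open MeasureTheory

/-- The real value of a binary digit. -/
noncomputable def bval (b : Bool) : ℝ := if b then 1 else 0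

/-- The two-dimensional digit shifted Hammersley point set with `2^n` points,
indexed by the digit vectors `t : Fin n → Bool`.  The index `i : Fin n`
corresponds to the digit `t_{i+1}` of the paper. -/
noncomputable def hammersleyShifted (n : ℕ) (σ : Fin n → Bool) (t : Fin n → Bool) : ℝ × ℝ :=
  (∑ i : Fin n, bval (t i) / 2 ^ (n - i.val),
   ∑ i : Fin n, bval (t i != σ i) / 2 ^ (i.val + 1))

/-- Number of points of the (indexed) point set `P` lying in `[0,t₁) × [0,t₂)`. -/
noncomputable def countIn {ι : Type*} [Fintype ι] (P : ι → ℝ × ℝ) (t : ℝ × ℝ) : ℕ :=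
  (Finset.univ.filter
    (fun k => 0 ≤ (P k).1 ∧ (P k).1 < t.1 ∧ 0 ≤ (P k).2 ∧ (P k).2 < t.2)).card

/-- The local discrepancy `D_N(P,t) = A_N([0,t),P)/N - t₁t₂` of an indexed point set. -/
noncomputable def localDisc {ι : Type*} [Fintype ι] (P : ι → ℝ × ℝ) (t : ℝ × ℝ) : ℝ :=
  (countIn P t : ℝ) / (Fintype.card ι) - t.1 * t.2

/-- The `L_p`-discrepancy of an indexed point set. -/
noncomputable def LpDisc (p : ℝ) {ι : Type*} [Fintype ι] (P : ι → ℝ × ℝ) : ℝ :=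
  (∫ t in Set.Icc (0 : ℝ × ℝ) 1, |localDisc P t| ^ p) ^ (1 / p)

/-- One-dimensional `L∞`-normalized Haar function `h_{j,m}`, with `j ∈ ℤ`, `j = -1`
giving the indicator of `[0,1)` and `j ≥ 0` the usual Haar function on `I_{j,m}`. -/
noncomputable def haar1 (j : ℤ) (m : ℕ) (x : ℝ) : ℝ :=
  if j = -1 then (if 0 ≤ x ∧ x < 1 then 1 else 0)
  else if (2 * m : ℝ) / 2 ^ (j.toNat + 1) ≤ x ∧ x < (2 * m + 1 : ℝ) / 2 ^ (j.toNat + 1) then 1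
  else if (2 * m + 1 : ℝ) / 2 ^ (j.toNat + 1) ≤ x ∧ x < (2 * m + 2 : ℝ) / 2 ^ (j.toNat + 1) then -1
  else 0

/-- Two-dimensional (tensor product) Haar function. -/
noncomputable def haar2 (j : ℤ × ℤ) (m : ℕ × ℕ) (x : ℝ × ℝ) : ℝ :=
  haar1 j.1 m.1 x.1 * haar1 j.2 m.2 x.2

/-- One-dimensional dyadic interval `I_{j,m}` (with `I_{-1,0} = [0,1)`). -/
noncomputable def dyadicI (j : ℤ) (m : ℕ) : Set ℝ :=
  if j = -1 then Set.Ico (0 : ℝ) 1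
  else Set.Ico ((m : ℝ) / 2 ^ j.toNat) ((m + 1 : ℝ) / 2 ^ j.toNat)

/-- Haar coefficient `μ_{j,m} = ∫_{[0,1]²} D_N(P,t) h_{j,m}(t) dt` of the local
discrepancy of an indexed point set. -/
noncomputable def haarCoeff {ι : Type*} [Fintype ι] (P : ι → ℝ × ℝ) (j : ℤ × ℤ) (m : ℕ × ℕ) : ℝ :=
  ∫ t in Set.Icc (0 : ℝ × ℝ) 1, localDisc P t * haar2 j m t

/-- Number of zero components of the shift `σ`. -/
noncomputable def zeroCount {n : ℕ} (σ : Fin n → Bool) : ℕ :=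
  (Finset.univ.filter (fun j => σ j = false)).card

/-- The symmetrized digit shifted Hammersley point set `R_{n,σ} ∪ R_{n,σ⊕1}`
with `2^(n+1)` points, indexed by `Bool × (Fin n → Bool)`. -/
noncomputable def hammersleySym (n : ℕ) (σ : Fin n → Bool) :
    Bool × (Fin n → Bool) → ℝ × ℝ :=
  fun bt => if bt.1 then hammersleyShifted n (fun i => !(σ i)) bt.2
            else hammersleyShifted n σ bt.2

/-- The multiset `R_{n,σ} ∪ {(x, 1-y) : (x,y) ∈ R_{n,σ}}` with `2^(n+1)` points
(counted with multiplicity), indexed by `Bool × (Fin n → Bool)`. -/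
noncomputable def hammersleySymTilde (n : ℕ) (σ : Fin n → Bool) :
    Bool × (Fin n → Bool) → ℝ × ℝ :=
  fun bt => if bt.1 then ((hammersleyShifted n σ bt.2).1, 1 - (hammersleyShifted n σ bt.2).2)
            else hammersleyShifted n σ bt.2

namespace HamAux

/-- numerator of the second-coordinate value -/
def YN : (n : ℕ) → (Fin n → Bool) → ℕ
  | 0, _ => 0
  | n + 1, s => 2 * YN n (Fin.init s) + (s (Fin.last n)).toNat

/-- numerator of the first-coordinate value -/
def XN : (n : ℕ) → (Fin n → Bool) → ℕ
  | 0, _ => 0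
  | n + 1, s => XN n (Fin.init s) + 2 ^ n * (s (Fin.last n)).toNat

lemma YN_snoc {n : ℕ} (s : Fin n → Bool) (b : Bool) :
    YN (n + 1) (Fin.snoc s b : Fin (n + 1) → Bool) = 2 * YN n s + b.toNat := by
  simp [YN]

lemma XN_snoc {n : ℕ} (s : Fin n → Bool) (b : Bool) :
    XN (n + 1) (Fin.snoc s b : Fin (n + 1) → Bool) = XN n s + 2 ^ n * b.toNat := by
  simp [XN]

lemma XN_lt (n : ℕ) (s : Fin n → Bool) : XN n s < 2 ^ n := by
  induction n with
  | zero => simp [XN]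
  | succ n ih =>
    have := ih (Fin.init s)
    rw [XN, pow_succ]
    cases s (Fin.last n) <;> simp <;> omega

lemma YN_lt (n : ℕ) (s : Fin n → Bool) : YN n s < 2 ^ n := by
  induction n with
  | zero => simp [YN]
  | succ n ih =>
    have := ih (Fin.init s)
    rw [YN, pow_succ]
    cases s (Fin.last n) <;> simp <;> omega

lemma ext_init {n : ℕ} {s t : Fin (n + 1) → Bool} (h1 : Fin.init s = Fin.init t)
    (h2 : s (Fin.last n) = t (Fin.last n)) : s = t := by
  rw [← Fin.snoc_init_self s, ← Fin.snoc_init_self t, h1, h2]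

lemma YN_inj (n : ℕ) : Function.Injective (YN n) := by
  induction n with
  | zero => intro s t _; exact Subsingleton.elim _ _
  | succ n ih =>
    intro s t h
    rw [YN, YN] at h
    apply ext_init
    · apply ih
      cases hs : s (Fin.last n) <;> cases ht : t (Fin.last n) <;> simp [hs, ht] at h <;> omega
    · cases hs : s (Fin.last n) <;> cases ht : t (Fin.last n) <;> simp [hs, ht] at h <;>
        first | rfl | omega

lemma XN_inj (n : ℕ) : Function.Injective (XN n) := by
  induction n with
  | zero => intro s t _; exact Subsingleton.elim _ _
  | succ n ih =>
    intro s t h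
    rw [XN, XN] at h
    have h1 := XN_lt n (Fin.init s)
    have h2 := XN_lt n (Fin.init t)
    apply ext_init
    · apply ih
      cases hs : s (Fin.last n) <;> cases ht : t (Fin.last n) <;> simp [hs, ht] at h <;> omega
    · cases hs : s (Fin.last n) <;> cases ht : t (Fin.last n) <;> simp [hs, ht] at h <;>
        first | rfl | omega

lemma YN_surj (n m : ℕ) (h : m < 2 ^ n) : ∃ s, YN n s = m := by
  have hb : Function.Bijective (fun s => (⟨YN n s, YN_lt n s⟩ : Fin (2 ^ n))) := by
    rw [Fintype.bijective_iff_injective_and_card]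
    refine ⟨fun s t h => YN_inj n (by simpa using h), by simp⟩
  obtain ⟨s, hs⟩ := hb.2 ⟨m, h⟩
  exact ⟨s, by simpa using hs⟩

lemma XN_surj (n m : ℕ) (h : m < 2 ^ n) : ∃ s, XN n s = m := by
  have hb : Function.Bijective (fun s => (⟨XN n s, XN_lt n s⟩ : Fin (2 ^ n))) := by
    rw [Fintype.bijective_iff_injective_and_card]
    refine ⟨fun s t h => XN_inj n (by simpa using h), by simp⟩
  obtain ⟨s, hs⟩ := hb.2 ⟨m, h⟩
  exact ⟨s, by simpa using hs⟩

lemma bval_eq (b : Bool) : bval b = (b.toNat : ℝ) := by cases b <;> simp [bval]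

lemma X_eq (n : ℕ) (t : Fin n → Bool) :
    ∑ i : Fin n, bval (t i) / 2 ^ (n - i.val) = (XN n t : ℝ) / 2 ^ n := by
  induction n with
  | zero => simp [XN]
  | succ n ih =>
    rw [Fin.sum_univ_castSucc, XN]
    have h := ih (Fin.init t)
    have : ∀ i : Fin n, bval (t i.castSucc) / 2 ^ (n + 1 - i.castSucc.val)
        = (bval (Fin.init t i) / 2 ^ (n - i.val)) / 2 := by
      intro i
      have : n + 1 - i.castSucc.val = (n - i.val) + 1 := by
        have := i.2; simp; omega
      rw [this, pow_succ, Fin.init]; field_simp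
    rw [Finset.sum_congr rfl (fun i _ => this i), ← Finset.sum_div, h, bval_eq]
    simp; field_simp; ring

lemma Y_eq (n : ℕ) (t : Fin n → Bool) :
    ∑ i : Fin n, bval (t i) / 2 ^ (i.val + 1) = (YN n t : ℝ) / 2 ^ n := by
  induction n with
  | zero => simp [YN]
  | succ n ih =>
    rw [Fin.sum_univ_castSucc, YN]
    have h := ih (Fin.init t)
    have : ∀ i : Fin n, bval (t i.castSucc) / 2 ^ (i.castSucc.val + 1)
        = (bval (Fin.init t i) / 2 ^ (i.val + 1)) := by
      intro i
      simp [Fin.init]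
    rw [Finset.sum_congr rfl (fun i _ => this i), h, bval_eq]
    simp; field_simp; ring

/-- pointwise xor -/
def xr {n : ℕ} (s t : Fin n → Bool) : Fin n → Bool := fun i => s i != t i

lemma xr_snoc {n : ℕ} (s t : Fin n → Bool) (b c : Bool) :
    xr (Fin.snoc s b : Fin (n + 1) → Bool) (Fin.snoc t c) = Fin.snoc (xr s t) (b != c) := by
  funext i
  refine Fin.lastCases ?_ (fun j => ?_) i <;> simp [xr]

lemma xr_xr {n : ℕ} (s t : Fin n → Bool) : xr (xr s t) t = s := by
  funext i; simp [xr]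

/-- sum over snoc -/
lemma sum_snoc {n : ℕ} (F : (Fin (n + 1) → Bool) → ℝ) :
    ∑ t, F t = ∑ t : Fin n → Bool, (F (Fin.snoc t false) + F (Fin.snoc t true)) := by
  rw [← (Fin.snocEquiv (fun _ : Fin (n + 1) => Bool)).sum_comp F, Fintype.sum_prod_type,
    Fintype.sum_bool, ← Finset.sum_add_distrib]
  refine Finset.sum_congr rfl fun t _ => ?_
  rw [add_comm]; rfl

/-- indicator -/
noncomputable def ind (P : Prop) : ℝ := open Classical in if P then 1 else 0

lemma sum_Y (n : ℕ) (σ b : Fin n → Bool) :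
    ∑ t, ind (YN n (xr t σ) < YN n b) = (YN n b : ℝ) := by
  induction n with
  | zero => simp [YN, ind]
  | succ n ih =>
    rw [sum_snoc]
    obtain ⟨σ, s, rfl⟩ : ∃ σ' s, σ = Fin.snoc σ' s := ⟨_, _, (Fin.snoc_init_self σ).symm⟩
    obtain ⟨b, d, rfl⟩ : ∃ σ' s, b = Fin.snoc σ' s := ⟨_, _, (Fin.snoc_init_self b).symm⟩
    have key : ∀ t : Fin n → Bool,
        ind (YN (n+1) (xr (Fin.snoc t false : Fin (n + 1) → Bool) (Fin.snoc σ s)) < YN (n+1) (Fin.snoc b d))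
        + ind (YN (n+1) (xr (Fin.snoc t true : Fin (n + 1) → Bool) (Fin.snoc σ s)) < YN (n+1) (Fin.snoc b d))
        = 2 * ind (YN n (xr t σ) < YN n b) + if t = xr b σ then (d.toNat : ℝ) else 0 := by
      intro t
      simp only [xr_snoc, YN_snoc]
      have h1 : t = xr b σ ↔ YN n (xr t σ) = YN n b := by
        rw [(YN_inj n).eq_iff]
        exact ⟨fun h => by rw [h, xr_xr], fun h => by rw [← h, xr_xr]⟩
      simp only [h1]
      unfold ind
      rcases lt_trichotomy (YN n (xr t σ)) (YN n b) with h | h | h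
      · cases s <;> cases d <;> simp [h, h.ne] <;> split_ifs <;> first | omega | norm_num
      · cases s <;> cases d <;> simp [h]
      · cases s <;> cases d <;> simp [h.not_gt, h.ne'] <;> omega
    rw [Finset.sum_congr rfl (fun t _ => key t), Finset.sum_add_distrib, ← Finset.mul_sum, ih,
      YN_snoc]
    simp

noncomputable def K (n : ℕ) (σ a b : Fin n → Bool) : ℝ :=
  ∑ t, ind (XN n t < XN n a ∧ YN n (xr t σ) < YN n b)

noncomputable def E (n : ℕ) (σ a b : Fin n → Bool) : ℝ := ind (XN n (xr b σ) < XN n a)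

lemma E_snoc (n : ℕ) (σ a b : Fin n → Bool) (s c d : Bool) :
    E (n + 1) (Fin.snoc σ s) (Fin.snoc a c) (Fin.snoc b d)
      = if c = (d != s) then E n σ a b else (c.toNat : ℝ) := by
  unfold E
  rw [xr_snoc, XN_snoc, XN_snoc]
  have h1 := XN_lt n a
  have h2 := XN_lt n (xr b σ)
  unfold ind
  cases c <;> cases d <;> cases s <;> simp <;> omega

lemma K_snoc (n : ℕ) (σ a b : Fin n → Bool) (s c d : Bool) :
    K (n + 1) (Fin.snoc σ s) (Fin.snoc a c) (Fin.snoc b d)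
      = K n σ a b + c.toNat * YN n b + d.toNat * (if c = s then E n σ a b else (c.toNat : ℝ)) := by
  unfold K
  rw [sum_snoc]
  have key : ∀ t : Fin n → Bool,
      ind (XN (n + 1) (Fin.snoc t false) < XN (n + 1) (Fin.snoc a c) ∧
        YN (n+1) (xr (Fin.snoc t false : Fin (n + 1) → Bool) (Fin.snoc σ s)) < YN (n+1) (Fin.snoc b d))
      + ind (XN (n + 1) (Fin.snoc t true) < XN (n + 1) (Fin.snoc a c) ∧
        YN (n+1) (xr (Fin.snoc t true : Fin (n + 1) → Bool) (Fin.snoc σ s)) < YN (n+1) (Fin.snoc b d))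
      = ind (XN n t < XN n a ∧ YN n (xr t σ) < YN n b) + c.toNat * ind (YN n (xr t σ) < YN n b)
        + if t = xr b σ then (d.toNat * (if c = s then ind (XN n t < XN n a) else (c.toNat : ℝ)))
          else 0 := by
    intro t
    simp only [xr_snoc, YN_snoc, XN_snoc]
    have h1 : t = xr b σ ↔ YN n (xr t σ) = YN n b := by
      rw [(YN_inj n).eq_iff]
      exact ⟨fun h => by rw [h, xr_xr], fun h => by rw [← h, xr_xr]⟩
    simp only [h1]
    have hx1 := XN_lt n a
    have hx2 := XN_lt n t
    generalize XN n a = A at *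
    generalize XN n t = T at *
    generalize YN n b = B at *
    generalize YN n (xr t σ) = U at *
    clear h1
    have e1 : (T + 2 ^ n < A) = False := by simp; omega
    have e2 : (T < A + 2 ^ n) = True := by simp; omega
    unfold ind
    rcases lt_trichotomy U B with h | h | h
    · have e3 : (2 * U + 1 < 2 * B) = True := by simp; omega
      have e4 : (2 * U < 2 * B + 1) = True := by simp; omega
      cases s <;> cases c <;> cases d <;> simp [h, h.ne, e1, e2, e3, e4] <;> ring
    · cases s <;> cases c <;> cases d <;> simp [h, e1, e2]
    · have e3 : (2 * U + 1 < 2 * B) = False := by simp; omega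
      have e4 : (2 * U < 2 * B + 1) = False := by simp; omega
      cases s <;> cases c <;> cases d <;> simp [h.not_gt, h.ne', e1, e2, e3, e4]
  rw [Finset.sum_congr rfl (fun t _ => key t), Finset.sum_add_distrib, Finset.sum_add_distrib,
    ← Finset.mul_sum, sum_Y]
  simp [E]

noncomputable def eps (s : Bool) : ℝ := if s then -1 else 1

noncomputable def W (n : ℕ) (σ a b : Fin n → Bool) : ℝ :=
  K n σ a b - (XN n a : ℝ) * YN n b / 2 ^ n

noncomputable def V (n : ℕ) (σ a b : Fin n → Bool) : ℝ :=
  W n σ a b + (E n σ a b - XN n a / 2 ^ n) / 2 - (∑ i, eps (σ i)) / 8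

noncomputable def Del (e f : ℝ) (s c d : Bool) : ℝ :=
  d.toNat * ((if c = s then e else (c.toNat : ℝ)) - (c.toNat + f) / 2)
   + ((if c = (d != s) then e else (c.toNat : ℝ)) - (c.toNat + f) / 2 - e + f) / 2 - eps s / 8

lemma Del_sum (e f : ℝ) (s : Bool) :
    Del e f s false false + Del e f s false true + Del e f s true false + Del e f s true true = 0 := by
  cases s <;> simp [Del, eps] <;> ring

lemma Del_abs (e f : ℝ) (s c d : Bool) (he0 : 0 ≤ e) (he1 : e ≤ 1) (hf0 : 0 ≤ f) (hf1 : f ≤ 1) :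
    |Del e f s c d| ≤ 3 := by
  rw [abs_le]
  cases s <;> cases c <;> cases d <;> simp [Del, eps] <;> constructor <;> linarith

lemma V_snoc (n : ℕ) (σ a b : Fin n → Bool) (s c d : Bool) :
    V (n + 1) (Fin.snoc σ s) (Fin.snoc a c) (Fin.snoc b d)
      = V n σ a b + Del (E n σ a b) (XN n a / 2 ^ n) s c d := by
  unfold V W Del
  rw [E_snoc, K_snoc, XN_snoc, YN_snoc, Fin.sum_univ_castSucc]
  simp only [Fin.snoc_castSucc, Fin.snoc_last]
  push_cast
  rw [pow_succ]
  field_simp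
  ring

lemma E_mem (n : ℕ) (σ a b : Fin n → Bool) : 0 ≤ E n σ a b ∧ E n σ a b ≤ 1 := by
  unfold E ind; split_ifs <;> simp

lemma f_mem (n : ℕ) (a : Fin n → Bool) : 0 ≤ (XN n a : ℝ) / 2 ^ n ∧ (XN n a : ℝ) / 2 ^ n ≤ 1 := by
  refine ⟨by positivity, ?_⟩
  rw [div_le_one (by positivity)]
  exact_mod_cast (XN_lt n a).le

lemma exp_conv (l x : ℝ) (hx : |x| ≤ 3) :
    Real.exp (l * x) ≤ Real.cosh (3 * l) + x / 3 * Real.sinh (3 * l) := by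
  obtain ⟨h1, h2⟩ := abs_le.1 hx
  have := convexOn_exp.2 (Set.mem_univ (3 * l)) (Set.mem_univ (-(3 * l)))
    (show (0 : ℝ) ≤ (3 + x) / 6 by linarith) (show (0 : ℝ) ≤ (3 - x) / 6 by linarith) (by ring)
  simp only [smul_eq_mul] at this
  rw [Real.cosh_eq, Real.sinh_eq]
  calc Real.exp (l * x) = Real.exp ((3 + x) / 6 * (3 * l) + (3 - x) / 6 * -(3 * l)) := by
        congr 1; ring
    _ ≤ _ := this
    _ = _ := by ring

lemma exp_sum (l : ℝ) (n : ℕ) (σ : Fin n → Bool) :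
    ∑ a, ∑ b, Real.exp (l * V n σ a b) ≤ (4 * Real.exp ((3 * l) ^ 2 / 2)) ^ n := by
  induction n with
  | zero => simp [V, W, K, E, XN, YN, ind]
  | succ n ih =>
    obtain ⟨σ, s, rfl⟩ : ∃ σ' s, σ = Fin.snoc σ' s := ⟨_, _, (Fin.snoc_init_self σ).symm⟩
    rw [sum_snoc]
    calc _ = ∑ a : Fin n → Bool, ∑ b : Fin n → Bool, Real.exp (l * V n σ a b) *
          (Real.exp (l * Del (E n σ a b) (XN n a / 2 ^ n) s false false) +
           Real.exp (l * Del (E n σ a b) (XN n a / 2 ^ n) s false true) +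
           Real.exp (l * Del (E n σ a b) (XN n a / 2 ^ n) s true false) +
           Real.exp (l * Del (E n σ a b) (XN n a / 2 ^ n) s true true)) := by
          refine Finset.sum_congr rfl fun a _ => ?_
          rw [sum_snoc, sum_snoc, ← Finset.sum_add_distrib]
          refine Finset.sum_congr rfl fun b _ => ?_
          simp only [V_snoc, mul_add, Real.exp_add]
          ring
      _ ≤ ∑ a : Fin n → Bool, ∑ b : Fin n → Bool, Real.exp (l * V n σ a b) *
            (4 * Real.exp ((3 * l) ^ 2 / 2)) := by
          refine Finset.sum_le_sum fun a _ => Finset.sum_le_sum fun b _ => ?_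
          refine mul_le_mul_of_nonneg_left ?_ (Real.exp_pos _).le
          obtain ⟨e0, e1⟩ := E_mem n σ a b
          obtain ⟨f0, f1⟩ := f_mem n a
          have hs := Del_sum (E n σ a b) (XN n a / 2 ^ n) s
          have h := fun c d => exp_conv l _ (Del_abs (E n σ a b) (XN n a / 2 ^ n) s c d e0 e1 f0 f1)
          have h1 := h false false
          have h2 := h false true
          have h3 := h true false
          have h4 := h true true
          have hc := Real.cosh_le_exp_half_sq (3 * l)
          have : (Del (E n σ a b) (XN n a / 2 ^ n) s false false +
            Del (E n σ a b) (XN n a / 2 ^ n) s false true +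
            Del (E n σ a b) (XN n a / 2 ^ n) s true false +
            Del (E n σ a b) (XN n a / 2 ^ n) s true true) / 3 * Real.sinh (3 * l) = 0 := by
            rw [hs]; simp
          linarith
      _ = (∑ a : Fin n → Bool, ∑ b : Fin n → Bool, Real.exp (l * V n σ a b)) *
            (4 * Real.exp ((3 * l) ^ 2 / 2)) := by
          simp only [Finset.sum_mul]
      _ ≤ _ := by
          rw [pow_succ]
          exact mul_le_mul_of_nonneg_right (ih σ) (by positivity)

lemma sum_eps (n : ℕ) (σ : Fin n → Bool) : ∑ i, eps (σ i) = 2 * (zeroCount σ : ℝ) - n := by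
  unfold zeroCount
  rw [Finset.card_filter]
  push_cast
  have : (n : ℝ) = ∑ i : Fin n, (1 : ℝ) := by simp
  rw [this, Finset.mul_sum, ← Finset.sum_sub_distrib]
  refine Finset.sum_congr rfl fun i _ => ?_
  cases σ i <;> simp [eps]; norm_num

lemma ham_eq (n : ℕ) (σ t : Fin n → Bool) :
    hammersleyShifted n σ t = ((XN n t : ℝ) / 2 ^ n, (YN n (xr t σ) : ℝ) / 2 ^ n) := by
  rw [hammersleyShifted, X_eq, ← Y_eq]; rfl

/-- the cell -/
def cell (n : ℕ) (a b : Fin n → Bool) : Set (ℝ × ℝ) :=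
  Set.Ico ((XN n a : ℝ) / 2 ^ n) ((XN n a + 1 : ℝ) / 2 ^ n) ×ˢ
    Set.Ico ((YN n b : ℝ) / 2 ^ n) ((YN n b + 1 : ℝ) / 2 ^ n)

lemma ind_nonneg (P : Prop) : 0 ≤ ind P := by unfold ind; split_ifs <;> simp

lemma count_close (n : ℕ) (σ a b : Fin n → Bool) (t : ℝ × ℝ) (ht : t ∈ cell n a b) :
    K n σ a b ≤ (countIn (hammersleyShifted n σ) t : ℝ) ∧
      (countIn (hammersleyShifted n σ) t : ℝ) ≤ K n σ a b + 2 := by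
  obtain ⟨⟨h1, h2⟩, h3, h4⟩ := ht
  have hN : (0 : ℝ) < 2 ^ n := by positivity
  rw [div_le_iff₀ hN] at h1 h3
  rw [lt_div_iff₀ hN] at h2 h4
  have hc : (countIn (hammersleyShifted n σ) t : ℝ)
      = ∑ k, ind ((XN n k : ℝ) < t.1 * 2 ^ n ∧ (YN n (xr k σ) : ℝ) < t.2 * 2 ^ n) := by
    unfold countIn
    rw [Finset.card_filter]
    push_cast
    refine Finset.sum_congr rfl fun k _ => ?_
    unfold ind
    rw [ham_eq]
    simp only [div_lt_iff₀ hN]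
    have p1 : (0 : ℝ) ≤ (XN n k : ℝ) / 2 ^ n := by positivity
    have p2 : (0 : ℝ) ≤ (YN n (xr k σ) : ℝ) / 2 ^ n := by positivity
    simp only [p1, p2, true_and]
    congr
  rw [hc]
  constructor
  · unfold K
    refine Finset.sum_le_sum fun k _ => ?_
    unfold ind
    by_cases h : XN n k < XN n a ∧ YN n (xr k σ) < YN n b
    · have q1 : (XN n k : ℝ) < XN n a := by exact_mod_cast h.1
      have q2 : (YN n (xr k σ) : ℝ) < YN n b := by exact_mod_cast h.2
      rw [if_pos h, if_pos ⟨by linarith, by linarith⟩]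
    · rw [if_neg h]; split_ifs <;> simp
  · have : K n σ a b + 2 = ∑ k, (ind (XN n k < XN n a ∧ YN n (xr k σ) < YN n b)
        + (if k = a then 1 else 0) + (if k = xr b σ then 1 else 0)) := by
      rw [Finset.sum_add_distrib, Finset.sum_add_distrib]
      simp [K]; ring
    rw [this]
    refine Finset.sum_le_sum fun k _ => ?_
    have n1 := ind_nonneg (XN n k < XN n a ∧ YN n (xr k σ) < YN n b)
    by_cases ha : k = a
    · rw [if_pos ha]
      have : ind ((XN n k : ℝ) < t.1 * 2 ^ n ∧ (YN n (xr k σ) : ℝ) < t.2 * 2 ^ n) ≤ 1 := by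
        unfold ind; split_ifs <;> simp
      have : (0 : ℝ) ≤ if k = xr b σ then 1 else 0 := by split_ifs <;> simp
      linarith
    by_cases hb : k = xr b σ
    · rw [if_pos hb, if_neg ha]
      have : ind ((XN n k : ℝ) < t.1 * 2 ^ n ∧ (YN n (xr k σ) : ℝ) < t.2 * 2 ^ n) ≤ 1 := by
        unfold ind; split_ifs <;> simp
      linarith
    rw [if_neg ha, if_neg hb, add_zero, add_zero]
    by_cases h : (XN n k : ℝ) < t.1 * 2 ^ n ∧ (YN n (xr k σ) : ℝ) < t.2 * 2 ^ n
    · have q1 : XN n k < XN n a + 1 := by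
        have : (XN n k : ℝ) < XN n a + 1 := by linarith
        exact_mod_cast this
      have q2 : YN n (xr k σ) < YN n b + 1 := by
        have : (YN n (xr k σ) : ℝ) < YN n b + 1 := by linarith
        exact_mod_cast this
      have r1 : XN n k ≠ XN n a := fun h => ha (XN_inj n h)
      have r2 : YN n (xr k σ) ≠ YN n b := fun h => hb (by rw [← YN_inj n h, xr_xr])
      have : XN n k < XN n a ∧ YN n (xr k σ) < YN n b := by omega
      unfold ind; rw [if_pos h, if_pos this]
    · have : ind ((XN n k : ℝ) < t.1 * 2 ^ n ∧ (YN n (xr k σ) : ℝ) < t.2 * 2 ^ n) = 0 := by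
        unfold ind; rw [if_neg h]
      rw [this]; exact n1

lemma disc_close (n : ℕ) (σ a b : Fin n → Bool) (t : ℝ × ℝ) (ht : t ∈ cell n a b) :
    |2 ^ n * localDisc (hammersleyShifted n σ) t| ≤
      |V n σ a b| + 3 + |2 * (zeroCount σ : ℝ) - n| / 8 := by
  obtain ⟨c1, c2⟩ := count_close n σ a b t ht
  obtain ⟨⟨h1, h2⟩, h3, h4⟩ := ht
  have hN : (0 : ℝ) < 2 ^ n := by positivity
  have hL : 2 ^ n * localDisc (hammersleyShifted n σ) t
      = countIn (hammersleyShifted n σ) t - 2 ^ n * (t.1 * t.2) := by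
    unfold localDisc
    simp
    field_simp
  have hprod : |2 ^ n * (t.1 * t.2) - (XN n a : ℝ) * YN n b / 2 ^ n - 1| ≤ 1 := by
    have f1 := f_mem n a
    have g0 : (0 : ℝ) ≤ (YN n b : ℝ) / 2 ^ n := by positivity
    have g1 : (YN n b : ℝ) / 2 ^ n + 1 / 2 ^ n ≤ 1 := by
      rw [← add_div, div_le_one hN]; exact_mod_cast YN_lt n b
    have f2 : (XN n a : ℝ) / 2 ^ n + 1 / 2 ^ n ≤ 1 := by
      rw [← add_div, div_le_one hN]; exact_mod_cast XN_lt n a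
    rw [add_div] at h2 h4
    have e : 2 ^ n * (t.1 * t.2) - (XN n a : ℝ) * YN n b / 2 ^ n
      = 2 ^ n * (t.1 * t.2 - (XN n a : ℝ) / 2 ^ n * ((YN n b : ℝ) / 2 ^ n)) := by field_simp
    rw [e]
    generalize (XN n a : ℝ) / 2 ^ n = α at *
    generalize (YN n b : ℝ) / 2 ^ n = β at *
    have l0 : 0 ≤ t.1 * t.2 - α * β := by nlinarith
    have l1 : t.1 * t.2 - α * β ≤ 2 * (1 / 2 ^ n) := by nlinarith
    have l2 : 2 ^ n * (t.1 * t.2 - α * β) ≤ 2 ^ n * (2 * (1 / 2 ^ n)) :=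
      mul_le_mul_of_nonneg_left l1 hN.le
    have l3 : (2 : ℝ) ^ n * (2 * (1 / 2 ^ n)) = 2 := by field_simp
    have l4 := mul_nonneg hN.le l0
    rw [abs_le]; constructor <;> linarith
  rw [hL]
  have hV : V n σ a b = K n σ a b - (XN n a : ℝ) * YN n b / 2 ^ n
    + (E n σ a b - XN n a / 2 ^ n) / 2 - (2 * (zeroCount σ : ℝ) - n) / 8 := by
    rw [← sum_eps]; rfl
  obtain ⟨e0, e1⟩ := E_mem n σ a b
  obtain ⟨f0, f1⟩ := f_mem n a
  obtain ⟨p1, p2⟩ := abs_le.1 hprod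
  have v1 := le_abs_self (V n σ a b)
  have v2 := neg_abs_le (V n σ a b)
  have z1 := le_abs_self (2 * (zeroCount σ : ℝ) - n)
  have z2 := neg_abs_le (2 * (zeroCount σ : ℝ) - n)
  rw [abs_le]; constructor <;> linarith

lemma cover (n : ℕ) (x : ℝ) (h0 : 0 ≤ x) (h1 : x < 1) :
    ∃ m : ℕ, m < 2 ^ n ∧ x ∈ Set.Ico ((m : ℝ) / 2 ^ n) ((m + 1 : ℝ) / 2 ^ n) := by
  have hN : (0 : ℝ) < 2 ^ n := by positivity
  refine ⟨⌊x * 2 ^ n⌋₊, ?_, ?_, ?_⟩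
  · rw [Nat.floor_lt (by positivity)]; push_cast; nlinarith
  · rw [div_le_iff₀ hN]; exact Nat.floor_le (by positivity)
  · rw [lt_div_iff₀ hN]; exact Nat.lt_floor_add_one _

lemma cell_cover (n : ℕ) (t : ℝ × ℝ) (ht : t ∈ Set.Ico (0 : ℝ) 1 ×ˢ Set.Ico (0 : ℝ) 1) :
    ∃ a b, t ∈ cell n a b := by
  obtain ⟨⟨h1, h2⟩, h3, h4⟩ := ht
  obtain ⟨m, hm, h⟩ := cover n t.1 h1 h2
  obtain ⟨m', hm', h'⟩ := cover n t.2 h3 h4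
  obtain ⟨a, rfl⟩ := XN_surj n m hm
  obtain ⟨b, rfl⟩ := YN_surj n m' hm'
  exact ⟨a, b, h, h'⟩

lemma cell_vol (n : ℕ) (a b : Fin n → Bool) : volume.real (cell n a b) = 1 / 4 ^ n := by
  unfold cell
  rw [Measure.volume_eq_prod, measureReal_prod_prod]
  simp only [Measure.real, Real.volume_Ico]
  have : (4 : ℝ) ^ n = 2 ^ n * 2 ^ n := by rw [← mul_pow]; norm_num
  have h : ((XN n a : ℝ) + 1) / 2 ^ n - XN n a / 2 ^ n = 1 / 2 ^ n := by ring
  have h' : ((YN n b : ℝ) + 1) / 2 ^ n - YN n b / 2 ^ n = 1 / 2 ^ n := by ring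
  rw [h, h', ENNReal.toReal_ofReal (by positivity), this]; field_simp

lemma cell_fin (n : ℕ) (a b : Fin n → Bool) : volume (cell n a b) ≠ ⊤ := by
  unfold cell
  rw [Measure.volume_eq_prod, Measure.prod_prod]
  simp [Real.volume_Ico, ENNReal.mul_eq_top]

lemma cell_meas (n : ℕ) (a b : Fin n → Bool) : MeasurableSet (cell n a b) :=
  measurableSet_Ico.prod measurableSet_Ico

lemma int_bound (n : ℕ) (G : ℝ × ℝ → ℝ) (hG : ∀ t, 0 ≤ G t)
    (H : (Fin n → Bool) → (Fin n → Bool) → ℝ) (hH : ∀ a b, 0 ≤ H a b)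
    (hle : ∀ a b, ∀ t ∈ cell n a b, G t ≤ H a b) :
    ∫ t in Set.Icc (0 : ℝ × ℝ) 1, G t ≤ (∑ a, ∑ b, H a b) / 4 ^ n := by
  have hset : (Set.Icc (0 : ℝ × ℝ) 1) =ᵐ[volume] (Set.Ico (0 : ℝ) 1 ×ˢ Set.Ico (0 : ℝ) 1) := by
    have : Set.Icc (0 : ℝ × ℝ) 1 = Set.Icc (0 : ℝ) 1 ×ˢ Set.Icc (0 : ℝ) 1 := by
      rw [Set.Icc_prod_Icc]; rfl
    rw [this, Measure.volume_eq_prod]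
    exact Measure.set_prod_ae_eq Ico_ae_eq_Icc.symm Ico_ae_eq_Icc.symm
  have hm : MeasurableSet (Set.Ico (0 : ℝ) 1 ×ˢ Set.Ico (0 : ℝ) 1) :=
    measurableSet_Ico.prod measurableSet_Ico
  rw [setIntegral_congr_set hset, ← integral_indicator hm]
  have hint : ∀ a b, Integrable ((cell n a b).indicator (fun _ => H a b)) volume := fun a b =>
    (integrable_indicator_iff (cell_meas n a b)).2 (integrableOn_const (cell_fin n a b))
  calc _ ≤ ∫ t, ∑ a, ∑ b, (cell n a b).indicator (fun _ => H a b) t := by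
        apply integral_mono_of_nonneg
        · exact Filter.Eventually.of_forall fun t => Set.indicator_nonneg (fun t _ => hG t) t
        · exact integrable_finsetSum _ fun a _ => integrable_finsetSum _ fun b _ => hint a b
        · refine Filter.Eventually.of_forall fun t => ?_
          have hnn : ∀ a b, 0 ≤ (cell n a b).indicator (fun _ => H a b) t := fun a b =>
            Set.indicator_nonneg (fun _ _ => hH a b) t
          by_cases ht : t ∈ Set.Ico (0 : ℝ) 1 ×ˢ Set.Ico (0 : ℝ) 1
          · obtain ⟨a, b, hab⟩ := cell_cover n t ht
            simp only
            rw [Set.indicator_of_mem ht]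
            calc G t ≤ H a b := hle a b t hab
              _ = (cell n a b).indicator (fun _ => H a b) t := by rw [Set.indicator_of_mem hab]
              _ ≤ ∑ b, (cell n a b).indicator (fun _ => H a b) t :=
                Finset.single_le_sum (f := fun b => (cell n a b).indicator (fun _ => H a b) t)
                  (fun b _ => hnn a b) (Finset.mem_univ b)
              _ ≤ _ := Finset.single_le_sum
                  (f := fun a => ∑ b, (cell n a b).indicator (fun _ => H a b) t)
                  (fun a _ => Finset.sum_nonneg fun b _ => hnn a b) (Finset.mem_univ a)
          · simp only
            rw [Set.indicator_of_notMem ht]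
            exact Finset.sum_nonneg fun a _ => Finset.sum_nonneg fun b _ => hnn a b
    _ = _ := by
        rw [integral_finsetSum _ fun a _ => integrable_finsetSum _ fun b _ => hint a b,
          Finset.sum_div]
        refine Finset.sum_congr rfl fun a _ => ?_
        rw [integral_finsetSum _ fun b _ => hint a b, Finset.sum_div]
        refine Finset.sum_congr rfl fun b _ => ?_
        rw [integral_indicator (cell_meas n a b), setIntegral_const, cell_vol, smul_eq_mul]
        ring

lemma rpow_le_exp (p u : ℝ) (hp : 0 < p) (hu : 0 ≤ u) : u ^ p ≤ p ^ p * Real.exp u := by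
  have h : u ≤ p * Real.exp (u / p) := by
    have := Real.add_one_le_exp (u / p)
    calc u = p * (u / p) := by field_simp
      _ ≤ _ := mul_le_mul_of_nonneg_left (by linarith) hp.le
  calc u ^ p ≤ (p * Real.exp (u / p)) ^ p := Real.rpow_le_rpow hu h hp.le
    _ = _ := by
      rw [Real.mul_rpow hp.le (Real.exp_pos _).le, ← Real.exp_mul]
      congr 2; field_simp

lemma main_bound (p : ℝ) (hp : 1 < p) (c : ℝ) (n : ℕ) (hn : 0 < n)
    (σ : Fin n → Bool) (hσ : |2 * (zeroCount σ : ℝ) - n| ≤ c * Real.sqrt n) :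
    LpDisc p (hammersleyShifted n σ) ≤
      (p ^ p * Real.exp (3 + c / 8) * (2 * Real.exp (9 / 2))) ^ (1 / p) * Real.sqrt n / 2 ^ n := by
  have hp0 : 0 < p := by linarith
  have hn1 : (1 : ℝ) ≤ n := by exact_mod_cast hn
  set r := Real.sqrt n with hr
  have hr1 : 1 ≤ r := by rw [hr]; exact Real.one_le_sqrt.2 hn1
  have hr0 : 0 < r := by linarith
  have hr2 : r ^ 2 = n := Real.sq_sqrt (by linarith)
  have hN : (0 : ℝ) < 2 ^ n := by positivity
  set A := p ^ p * Real.exp (3 + c / 8) with hA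
  have hA0 : 0 < A := by positivity
  have hq : 0 < r / 2 ^ n := by positivity
  have key : ∫ t in Set.Icc (0 : ℝ × ℝ) 1, |localDisc (hammersleyShifted n σ) t| ^ p ≤
      (∑ a, ∑ b, (r / 2 ^ n) ^ p * (A * (Real.exp (r⁻¹ * V n σ a b)
        + Real.exp (-r⁻¹ * V n σ a b)))) / 4 ^ n := by
    apply int_bound
    · intro t; positivity
    · intro a b; positivity
    · intro a b t ht
      have h := disc_close n σ a b t ht
      set D := localDisc (hammersleyShifted n σ) t
      have e : |D| = r / 2 ^ n * (|2 ^ n * D| / r) := by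
        rw [abs_mul, abs_of_pos hN]; field_simp
      rw [e, Real.mul_rpow hq.le (by positivity)]
      refine mul_le_mul_of_nonneg_left ?_ (by positivity)
      have hu : |2 ^ n * D| / r ≤ |r⁻¹ * V n σ a b| + (3 + c / 8) := by
        rw [div_le_iff₀ hr0, abs_mul r⁻¹, abs_of_pos (inv_pos.2 hr0)]
        have : (r⁻¹ * |V n σ a b| + (3 + c / 8)) * r = |V n σ a b| + 3 * r + c * r / 8 := by
          field_simp; ring
        rw [this]; linarith
      have hexp : Real.exp |r⁻¹ * V n σ a b| ≤
          Real.exp (r⁻¹ * V n σ a b) + Real.exp (-r⁻¹ * V n σ a b) := by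
        rw [neg_mul]
        rcases abs_cases (r⁻¹ * V n σ a b) with ⟨h, _⟩ | ⟨h, _⟩ <;> rw [h]
        · linarith [Real.exp_pos (-(r⁻¹ * V n σ a b))]
        · linarith [Real.exp_pos ((r⁻¹ * V n σ a b))]
      calc _ ≤ p ^ p * Real.exp (|2 ^ n * D| / r) := rpow_le_exp p _ hp0 (by positivity)
        _ ≤ p ^ p * Real.exp (|r⁻¹ * V n σ a b| + (3 + c / 8)) := by
          gcongr
        _ = A * Real.exp |r⁻¹ * V n σ a b| := by rw [Real.exp_add, hA]; ring
        _ ≤ _ := by gcongr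
  have hE : ∀ l : ℝ, l ^ 2 = (r⁻¹) ^ 2 →
      (∑ a, ∑ b, Real.exp (l * V n σ a b)) ≤ 4 ^ n * Real.exp (9 / 2) := by
    intro l hl
    refine (exp_sum l n σ).trans (le_of_eq ?_)
    rw [mul_pow, ← Real.exp_nat_mul, mul_pow, hl, inv_pow, hr2]
    congr 2; field_simp; norm_num
  have key2 : ∫ t in Set.Icc (0 : ℝ × ℝ) 1, |localDisc (hammersleyShifted n σ) t| ^ p ≤
      (r / 2 ^ n) ^ p * (A * (2 * Real.exp (9 / 2))) := by
    clear_value A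
    refine key.trans ?_
    rw [div_le_iff₀ (by positivity)]
    simp only [← Finset.mul_sum, Finset.sum_add_distrib]
    have h1 := hE r⁻¹ rfl
    have h2 := hE (-r⁻¹) (by ring)
    rw [mul_assoc, mul_assoc]
    gcongr
    linarith
  unfold LpDisc
  calc _ ≤ ((r / 2 ^ n) ^ p * (A * (2 * Real.exp (9 / 2)))) ^ (1 / p) := by
        apply Real.rpow_le_rpow _ key2 (by positivity)
        exact integral_nonneg fun t => by positivity
    _ = _ := by
        rw [Real.mul_rpow (by positivity) (by positivity), ← Real.rpow_mul hq.le,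
          mul_one_div_cancel hp0.ne', Real.rpow_one]
        ring

end HamAux

/-- If the number of zero components of the shift is balanced, `|2aₙ - n| ≤ c√n`, then
the digit shifted Hammersley point set has optimal `L_p`-discrepancy `≪ √(log N)/N`. -/
theorem statement0 (p : ℝ) (hp : 1 < p) (c : ℝ) (hc : 0 ≤ c) :
    ∃ C : ℝ, 0 < C ∧ ∀ n : ℕ, 0 < n → ∀ σ : Fin n → Bool,
      |2 * (zeroCount σ : ℝ) - n| ≤ c * Real.sqrt n →
      LpDisc p (hammersleyShifted n σ) ≤
        C * Real.sqrt (Real.log ((2 : ℝ) ^ n)) / 2 ^ n := by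
  have hl : 0 < Real.sqrt (Real.log 2) := Real.sqrt_pos.2 (Real.log_pos (by norm_num))
  have hp0 : 0 < p := by linarith
  refine ⟨(p ^ p * Real.exp (3 + c / 8) * (2 * Real.exp (9 / 2))) ^ (1 / p)
    / Real.sqrt (Real.log 2), by positivity, fun n hn σ hσ => ?_⟩
  refine (HamAux.main_bound p hp c n hn σ hσ).trans (le_of_eq ?_)
  rw [Real.log_pow, Real.sqrt_mul (by positivity)]
  field_simp
end

section
/- Let p ∈ (1,∞). There exists a constant c_p > 0 such that for all n ∈ ℕ and all shifts σ ∈ {0,1}^n, the L_p-discrepancy of the two-dimensional digit shifted Hammersley point set with N = 2^n points satisfies L_{p,N}(R_{n,σ}) ≥ c_p · |(2a_n + 4 − n)/2^{n+3} + 1/2^{2(n+1)}|, where a_n = #{j : σ_j = 0}. Consequently, if L_{p,N}(R_{n,σ}) ≤ C√(log N)/N for a family of shifts, then |2a_n − n| ≤ C'√n for a constant C' depending only on p and C. -/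
open MeasureTheory

lemma geoA (n : ℕ) : ∑ i : Fin n, (1 : ℝ) / 2 ^ (i.val + 1) = 1 - 1 / 2 ^ n := by
  rw [Fin.sum_univ_eq_sum_range (fun i => (1 : ℝ) / 2 ^ (i + 1)) n]
  induction n with
  | zero => simp
  | succ k ih => rw [Finset.sum_range_succ, ih]; field_simp; ring

lemma geoB (n : ℕ) : ∑ i : Fin n, (1 : ℝ) / 2 ^ (n - i.val) = 1 - 1 / 2 ^ n := by
  rw [← geoA, Fin.sum_univ_eq_sum_range (fun i => (1 : ℝ) / 2 ^ (n - i)) n,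
    Fin.sum_univ_eq_sum_range (fun i => (1 : ℝ) / 2 ^ (i + 1)) n,
    ← Finset.sum_range_reflect]
  refine Finset.sum_congr rfl fun i hi => ?_
  have := Finset.mem_range.1 hi
  congr 2
  omega

lemma bval_nonneg (b : Bool) : 0 ≤ bval b := by cases b <;> simp [bval]
lemma bval_le (b : Bool) : bval b ≤ 1 := by cases b <;> simp [bval]

/-- centred digit -/
noncomputable def ee (b : Bool) : ℝ := bval b - 1 / 2

/-- sign -/
noncomputable def sg (b : Bool) : ℝ := if b then -1 else 1

lemma ee_xor (a b : Bool) : ee (a != b) = sg b * ee a := by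
  cases a <;> cases b <;> norm_num [ee, sg, bval]

lemma ee_not (a : Bool) : ee (!a) = - ee a := by
  cases a <;> norm_num [ee, bval]

lemma ee_sq (a : Bool) : ee a * ee a = 1 / 4 := by
  cases a <;> norm_num [ee, bval]

/-- flipping one digit -/
def flipE {n : ℕ} (i : Fin n) : (Fin n → Bool) ≃ (Fin n → Bool) :=
  Function.Involutive.toPerm (fun t => Function.update t i (!(t i))) (by
    intro t; simp)

lemma flipE_same {n : ℕ} (i : Fin n) (t : Fin n → Bool) : flipE i t i = !(t i) := by
  simp [flipE, Function.Involutive.toPerm]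

lemma flipE_ne {n : ℕ} (i j : Fin n) (h : j ≠ i) (t : Fin n → Bool) : flipE i t j = t j := by
  simp [flipE, Function.Involutive.toPerm, h]

lemma sum_ee {n : ℕ} (i : Fin n) : ∑ t : Fin n → Bool, ee (t i) = 0 := by
  have h := Equiv.sum_comp (flipE i) (fun t => ee (t i))
  simp only [flipE_same, ee_not, Finset.sum_neg_distrib] at h
  linarith

lemma sum_ee_ee {n : ℕ} (i j : Fin n) :
    ∑ t : Fin n → Bool, ee (t i) * ee (t j) = if i = j then 2 ^ n / 4 else 0 := by
  split_ifs with hij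
  · subst hij
    simp only [ee_sq]
    simp
    ring
  · have h := Equiv.sum_comp (flipE i) (fun t => ee (t i) * ee (t j))
    simp only [flipE_same, flipE_ne i j (Ne.symm hij), ee_not, neg_mul,
      Finset.sum_neg_distrib] at h
    linarith

lemma ham_fst (n : ℕ) (σ t : Fin n → Bool) : 1 - (hammersleyShifted n σ t).1 =
    (1 + 1 / 2 ^ n) / 2 - ∑ i : Fin n, ee (t i) / 2 ^ (n - i.val) := by
  have h := geoB n
  have : ∑ i : Fin n, bval (t i) / (2:ℝ) ^ (n - i.val) = ∑ i : Fin n, ee (t i) / 2 ^ (n - i.val)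
      + (1 / 2) * ∑ i : Fin n, (1 : ℝ) / 2 ^ (n - i.val) := by
    rw [Finset.mul_sum, ← Finset.sum_add_distrib]
    refine Finset.sum_congr rfl fun i _ => ?_
    unfold ee; ring
  simp only [hammersleyShifted]
  rw [this, h]; ring

lemma ham_snd (n : ℕ) (σ t : Fin n → Bool) : 1 - (hammersleyShifted n σ t).2 =
    (1 + 1 / 2 ^ n) / 2 - ∑ i : Fin n, sg (σ i) * ee (t i) / 2 ^ (i.val + 1) := by
  have h := geoA n
  have : ∑ i : Fin n, bval (t i != σ i) / (2:ℝ) ^ (i.val + 1)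
      = ∑ i : Fin n, sg (σ i) * ee (t i) / 2 ^ (i.val + 1)
      + (1 / 2) * ∑ i : Fin n, (1 : ℝ) / 2 ^ (i.val + 1) := by
    rw [Finset.mul_sum, ← Finset.sum_add_distrib]
    refine Finset.sum_congr rfl fun i _ => ?_
    rw [← ee_xor]
    unfold ee; ring
  simp only [hammersleyShifted]
  rw [this, h]; ring

lemma sum_sg {n : ℕ} (σ : Fin n → Bool) : ∑ i, sg (σ i) = 2 * (zeroCount σ : ℝ) - n := by
  have h1 : ∀ b, sg b = 2 * (if b = false then (1:ℝ) else 0) - 1 := by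
    intro b; cases b <;> norm_num [sg]
  simp only [h1, Finset.sum_sub_distrib, ← Finset.mul_sum]
  simp [zeroCount]

lemma sum_UV {n : ℕ} (σ : Fin n → Bool) :
    ∑ t : Fin n → Bool, (∑ i : Fin n, ee (t i) / (2:ℝ) ^ (n - i.val)) *
      (∑ i : Fin n, sg (σ i) * ee (t i) / 2 ^ (i.val + 1))
    = 2 ^ n * ((2 * (zeroCount σ : ℝ) - n) / 2 ^ (n + 3)) := by
  simp only [Finset.sum_mul_sum]
  rw [Finset.sum_comm]
  have : ∀ i : Fin n, ∑ t : Fin n → Bool, ∑ j : Fin n, ee (t i) / (2:ℝ) ^ (n - i.val) *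
      (sg (σ j) * ee (t j) / 2 ^ (j.val + 1)) = sg (σ i) / 8 := by
    intro i
    rw [Finset.sum_comm]
    have h2 : ∀ j : Fin n, ∑ t : Fin n → Bool, ee (t i) / (2:ℝ) ^ (n - i.val) *
      (sg (σ j) * ee (t j) / 2 ^ (j.val + 1)) =
        if i = j then sg (σ j) / 8 else 0 := by
      intro j
      have h3 : ∀ t : Fin n → Bool, ee (t i) / (2:ℝ) ^ (n - i.val) *
        (sg (σ j) * ee (t j) / 2 ^ (j.val + 1)) =
        (sg (σ j) / (2 ^ (n - i.val) * 2 ^ (j.val + 1))) * (ee (t i) * ee (t j)) := by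
        intro t; field_simp
      simp only [h3, ← Finset.mul_sum, sum_ee_ee]
      split_ifs with hij
      · subst hij
        rw [← pow_add, show n - i.val + (i.val + 1) = n + 1 by have := i.2; omega, pow_succ]
        field_simp; ring
      · simp
    simp [h2]
  simp only [this]
  rw [← Finset.sum_div, sum_sg, pow_add]
  field_simp; ring

lemma sum_main {n : ℕ} (σ : Fin n → Bool) :
    ∑ t : Fin n → Bool, (1 - (hammersleyShifted n σ t).1) * (1 - (hammersleyShifted n σ t).2)
    = 2 ^ n * (((1 + 1 / 2 ^ n) / 2) ^ 2 + (2 * (zeroCount σ : ℝ) - n) / 2 ^ (n + 3)) := by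
  simp only [ham_fst, ham_snd]
  have hU : ∑ t : Fin n → Bool, ∑ i : Fin n, ee (t i) / (2:ℝ) ^ (n - i.val) = 0 := by
    rw [Finset.sum_comm]
    simp [← Finset.sum_div, sum_ee]
  have hV : ∑ t : Fin n → Bool, ∑ i : Fin n, sg (σ i) * ee (t i) / (2:ℝ) ^ (i.val + 1) = 0 := by
    rw [Finset.sum_comm]
    simp [← Finset.sum_div, ← Finset.mul_sum, sum_ee]
  have h := sum_UV σ
  set A : ℝ := (1 + 1 / 2 ^ n) / 2
  simp only [sub_mul, mul_sub, Finset.sum_sub_distrib, ← Finset.mul_sum, ← Finset.sum_mul, hU, hV,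
    h]
  simp
  ring

/-- step function -/
noncomputable def stp (x t : ℝ) : ℝ := if x < t then 1 else 0

lemma stp_eq (x : ℝ) : stp x = (Set.Ioi x).indicator (fun _ => (1:ℝ)) := by
  ext t; simp [stp, Set.indicator]

lemma stp_meas (x : ℝ) : Measurable (stp x) := by
  rw [stp_eq]; exact measurable_const.indicator measurableSet_Ioi

lemma stp_int (x : ℝ) (h0 : 0 ≤ x) (h1 : x ≤ 1) : ∫ t in Set.Icc (0:ℝ) 1, stp x t = 1 - x := by
  rw [stp_eq, setIntegral_indicator measurableSet_Ioi]
  have : Set.Icc (0:ℝ) 1 ∩ Set.Ioi x = Set.Ioc x 1 := by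
    ext t; simp only [Set.mem_inter_iff, Set.mem_Icc, Set.mem_Ioi, Set.mem_Ioc]
    constructor
    · rintro ⟨⟨a, b⟩, c⟩; exact ⟨c, b⟩
    · rintro ⟨a, b⟩; exact ⟨⟨by linarith, b⟩, a⟩
  rw [this]
  simp [h1]

lemma ham_bounds (n : ℕ) (σ t : Fin n → Bool) :
    (0 ≤ (hammersleyShifted n σ t).1 ∧ (hammersleyShifted n σ t).1 ≤ 1) ∧
    (0 ≤ (hammersleyShifted n σ t).2 ∧ (hammersleyShifted n σ t).2 ≤ 1) := by
  have hp : (0:ℝ) < 1 / 2 ^ n := by positivity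
  simp only [hammersleyShifted]
  refine ⟨⟨?_, ?_⟩, ?_, ?_⟩
  · exact Finset.sum_nonneg fun i _ => div_nonneg (bval_nonneg _) (pow_nonneg (by norm_num) _)
  · refine le_trans (Finset.sum_le_sum (g := fun i : Fin n => (1:ℝ) / 2 ^ (n - i.val)) ?_) ?_
    · intro i _
      exact div_le_div_of_nonneg_right (bval_le _) (by positivity)
    · rw [geoB]; linarith
  · exact Finset.sum_nonneg fun i _ => div_nonneg (bval_nonneg _) (pow_nonneg (by norm_num) _)
  · refine le_trans (Finset.sum_le_sum (g := fun i : Fin n => (1:ℝ) / 2 ^ (i.val + 1)) ?_) ?_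
    · intro i _
      exact div_le_div_of_nonneg_right (bval_le _) (by positivity)
    · rw [geoA]; linarith

lemma localDisc_eq (n : ℕ) (σ : Fin n → Bool) (t : ℝ × ℝ) :
    localDisc (hammersleyShifted n σ) t =
      (∑ k : Fin n → Bool, stp (hammersleyShifted n σ k).1 t.1 *
        stp (hammersleyShifted n σ k).2 t.2) / 2 ^ n - t.1 * t.2 := by
  unfold localDisc countIn
  rw [Finset.card_filter]
  push_cast
  congr 2
  · refine Finset.sum_congr rfl fun k _ => ?_
    obtain ⟨⟨h1, _⟩, h2, _⟩ := ham_bounds n σ k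
    simp only [stp, h1, h2, true_and]
    split_ifs <;> simp_all
  · simp

lemma vol_sq : (volume : Measure (ℝ × ℝ)).restrict (Set.Icc (0 : ℝ × ℝ) 1) =
    ((volume : Measure ℝ).restrict (Set.Icc 0 1)).prod
      ((volume : Measure ℝ).restrict (Set.Icc 0 1)) := by
  rw [Measure.prod_restrict, ← Measure.volume_eq_prod, Set.Icc_prod_Icc]
  rfl

instance prob1 : IsProbabilityMeasure ((volume : Measure ℝ).restrict (Set.Icc 0 1)) :=
  ⟨by simp⟩

instance prob2 : IsProbabilityMeasure
    ((volume : Measure (ℝ × ℝ)).restrict (Set.Icc (0 : ℝ × ℝ) 1)) := by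
  rw [vol_sq]; infer_instance

lemma term_meas (x y : ℝ) : Measurable (fun t : ℝ × ℝ => stp x t.1 * stp y t.2) :=
  ((stp_meas x).comp measurable_fst).mul ((stp_meas y).comp measurable_snd)

lemma term_intble (x y : ℝ) : Integrable (fun t : ℝ × ℝ => stp x t.1 * stp y t.2)
    ((volume : Measure (ℝ × ℝ)).restrict (Set.Icc (0 : ℝ × ℝ) 1)) := by
  refine Integrable.of_bound (term_meas x y).aestronglyMeasurable 1 (Filter.Eventually.of_forall ?_)
  intro t
  unfold stp
  split_ifs <;> simp

lemma prod_intble : Integrable (fun t : ℝ × ℝ => t.1 * t.2)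
    ((volume : Measure (ℝ × ℝ)).restrict (Set.Icc (0 : ℝ × ℝ) 1)) :=
  (Continuous.integrableOn_Icc (by fun_prop))

lemma disc_meas (n : ℕ) (σ : Fin n → Bool) : Measurable (localDisc (hammersleyShifted n σ)) := by
  have : localDisc (hammersleyShifted n σ) = fun t => (∑ k : Fin n → Bool,
      stp (hammersleyShifted n σ k).1 t.1 *
        stp (hammersleyShifted n σ k).2 t.2) / 2 ^ n - t.1 * t.2 := funext (localDisc_eq n σ)
  rw [this]
  exact ((Finset.measurable_sum _ fun k _ => term_meas _ _).div_const _).sub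
    (measurable_fst.mul measurable_snd)

lemma disc_integral (n : ℕ) (σ : Fin n → Bool) :
    ∫ t in Set.Icc (0 : ℝ × ℝ) 1, localDisc (hammersleyShifted n σ) t =
    (2 * (zeroCount σ : ℝ) + 4 - n) / 2 ^ (n + 3) + 1 / 2 ^ (2 * (n + 1)) := by
  simp only [localDisc_eq]
  rw [integral_sub ((integrable_finsetSum _ fun k _ => term_intble _ _).div_const _) prod_intble,
    integral_div, integral_finsetSum _ fun k _ => term_intble _ _]
  have h1 : ∀ k : Fin n → Bool, ∫ t in Set.Icc (0 : ℝ × ℝ) 1,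
      stp (hammersleyShifted n σ k).1 t.1 * stp (hammersleyShifted n σ k).2 t.2 =
      (1 - (hammersleyShifted n σ k).1) * (1 - (hammersleyShifted n σ k).2) := by
    intro k
    obtain ⟨⟨h1, h2⟩, h3, h4⟩ := ham_bounds n σ k
    rw [vol_sq, integral_prod_mul, stp_int _ h1 h2, stp_int _ h3 h4]
  have h2 : ∫ t in Set.Icc (0 : ℝ × ℝ) 1, t.1 * t.2 = 1 / 4 := by
    rw [vol_sq, integral_prod_mul (fun x : ℝ => x) (fun x : ℝ => x)]
    rw [integral_Icc_eq_integral_Ioc, ← intervalIntegral.integral_of_le zero_le_one, integral_id]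
    norm_num
  simp only [h1]
  rw [h2, sum_main, show 2 * (n + 1) = n + n + 2 by ring, pow_add, pow_add, pow_add]
  field_simp
  ring

lemma disc_bound (n : ℕ) (σ : Fin n → Bool) (t : ℝ × ℝ) (ht : t ∈ Set.Icc (0 : ℝ × ℝ) 1) :
    |localDisc (hammersleyShifted n σ) t| ≤ 2 := by
  have ha : (0:ℝ) ≤ (countIn (hammersleyShifted n σ) t : ℝ) /
      (Fintype.card (Fin n → Bool)) := by positivity
  have hb : (countIn (hammersleyShifted n σ) t : ℝ) / (Fintype.card (Fin n → Bool)) ≤ 1 := by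
    apply div_le_one_of_le₀ _ (by positivity)
    exact_mod_cast Finset.card_le_univ _
  have h1 := ht.1.1
  have h2 := ht.1.2
  have h3 := ht.2.1
  have h4 := ht.2.2
  simp only [Prod.fst_zero, Prod.snd_zero, Prod.fst_one, Prod.snd_one] at h1 h2 h3 h4
  have h5 : 0 ≤ t.1 * t.2 := mul_nonneg h1 h2
  have h6 : t.1 * t.2 ≤ 1 := mul_le_one₀ h3 h2 h4
  unfold localDisc
  rw [abs_le]; constructor <;> linarith

lemma main_ineq (p : ℝ) (hp : 1 < p) (n : ℕ) (σ : Fin n → Bool) :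
    |(2 * (zeroCount σ : ℝ) + 4 - n) / 2 ^ (n + 3) + 1 / 2 ^ (2 * (n + 1))| ≤
      LpDisc p (hammersleyShifted n σ) := by
  rw [← disc_integral]
  refine (abs_integral_le_integral_abs).trans ?_
  have hm := disc_meas n σ
  have hb : ∀ᵐ t ∂((volume : Measure (ℝ × ℝ)).restrict (Set.Icc (0 : ℝ × ℝ) 1)),
      |localDisc (hammersleyShifted n σ) t| ≤ 2 :=
    (ae_restrict_iff' measurableSet_Icc).2 (Filter.Eventually.of_forall (disc_bound n σ))
  have i1 : Integrable (fun t => |localDisc (hammersleyShifted n σ) t|)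
      ((volume : Measure (ℝ × ℝ)).restrict (Set.Icc (0 : ℝ × ℝ) 1)) := by
    refine Integrable.of_bound (C := 2) hm.abs.aestronglyMeasurable ?_
    filter_upwards [hb] with t ht
    simpa using ht
  have i2 : Integrable (fun t => |localDisc (hammersleyShifted n σ) t| ^ p)
      ((volume : Measure (ℝ × ℝ)).restrict (Set.Icc (0 : ℝ × ℝ) 1)) := by
    refine Integrable.of_bound (C := 2 ^ p) (hm.abs.pow_const p).aestronglyMeasurable ?_
    filter_upwards [hb] with t ht
    rw [Real.norm_of_nonneg (by positivity)]
    exact Real.rpow_le_rpow (abs_nonneg _) ht (by linarith)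
  have J := (convexOn_rpow hp.le).map_integral_le
    (f := fun t => |localDisc (hammersleyShifted n σ) t|)
    (μ := (volume : Measure (ℝ × ℝ)).restrict (Set.Icc (0 : ℝ × ℝ) 1))
    (Real.continuous_rpow_const (by linarith)).continuousOn isClosed_Ici
    (Filter.Eventually.of_forall fun t => Set.mem_Ici.2 (abs_nonneg _)) i1 i2
  unfold LpDisc
  rw [one_div, Real.le_rpow_inv_iff_of_pos (integral_nonneg fun t => abs_nonneg _)
    (integral_nonneg fun t => by positivity) (by linarith)]
  exact J

/-- Lower bound for the `L_p`-discrepancy of the digit shifted Hammersley point set, and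
the consequence that optimal order forces the shift to be balanced. -/
theorem statement1 (p : ℝ) (hp : 1 < p) :
    (∃ c : ℝ, 0 < c ∧ ∀ n : ℕ, 0 < n → ∀ σ : Fin n → Bool,
      c * |(2 * (zeroCount σ : ℝ) + 4 - n) / 2 ^ (n + 3) + 1 / 2 ^ (2 * (n + 1))| ≤
        LpDisc p (hammersleyShifted n σ)) ∧
    (∀ C : ℝ, 0 < C → ∃ C' : ℝ, 0 < C' ∧ ∀ n : ℕ, 0 < n → ∀ σ : Fin n → Bool,
      LpDisc p (hammersleyShifted n σ) ≤
          C * Real.sqrt (Real.log ((2 : ℝ) ^ n)) / 2 ^ n →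
      |2 * (zeroCount σ : ℝ) - n| ≤ C' * Real.sqrt n) := by
  refine ⟨⟨1, one_pos, fun n _ σ => by rw [one_mul]; exact main_ineq p hp n σ⟩, ?_⟩
  intro C hC
  refine ⟨8 * C + 6, by positivity, fun n hn σ h => ?_⟩
  have h1 := (main_ineq p hp n σ).trans h
  have hP : (1:ℝ) ≤ 2 ^ n := one_le_pow₀ (by norm_num)
  have hs : (1:ℝ) ≤ Real.sqrt n := by
    rw [Real.one_le_sqrt]; exact_mod_cast hn
  have hl : Real.sqrt (Real.log ((2 : ℝ) ^ n)) ≤ Real.sqrt n := by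
    apply Real.sqrt_le_sqrt
    rw [Real.log_pow]
    have : Real.log 2 ≤ 1 := by linarith [Real.log_two_lt_d9]
    have hn0 : (0:ℝ) ≤ n := by positivity
    nlinarith
  have e : (2 * (zeroCount σ : ℝ) + 4 - n) / 2 ^ (n + 3) + 1 / 2 ^ (2 * (n + 1)) =
      ((2 * (zeroCount σ : ℝ) - n) + (4 + 2 / 2 ^ n)) / 8 / 2 ^ n := by
    rw [show 2 * (n + 1) = n + n + 2 by ring, pow_add, pow_add, pow_add]
    field_simp
    ring
  rw [e, abs_div, abs_of_pos (show (0:ℝ) < 2 ^ n by positivity),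
    div_le_div_iff_of_pos_right (by positivity), abs_div, abs_of_pos (show (0:ℝ) < 8 by norm_num),
    div_le_iff₀ (by norm_num)] at h1
  have h2 : C * Real.sqrt (Real.log ((2 : ℝ) ^ n)) ≤ C * Real.sqrt n :=
    mul_le_mul_of_nonneg_left hl hC.le
  have h3 : (2:ℝ) / 2 ^ n ≤ 2 := div_le_self (by norm_num) hP
  have h4 : (0:ℝ) ≤ 2 / 2 ^ n := by positivity
  rw [abs_le] at h1 ⊢
  constructor <;> nlinarith [h1.1, h1.2]
end

section
/- Let p ∈ (1,∞). There exists a constant C_p > 0 such that for all n ∈ ℕ and all shifts σ ∈ {0,1}^n, the L_p-discrepancy of the two-dimensional symmetrized digit shifted Hammersley point set with N = 2^{n+1} points satisfies L_{p,N}(R_{n,σ}^{sym}) ≤ C_p · √(log N)/N, independently of σ. -/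
open MeasureTheory

namespace HS

def X : (n : ℕ) → (Fin n → Bool) → ℕ
  | 0, _ => 0
  | n + 1, t => X n (fun i => t i.castSucc) + (t (Fin.last n)).toNat * 2 ^ n

def Y (s : ℕ → Bool) : (n : ℕ) → (Fin n → Bool) → ℕ
  | 0, _ => 0
  | n + 1, t => 2 * Y s n (fun i => t i.castSucc) + (t (Fin.last n) != s n).toNat

lemma bval_eq (b : Bool) : bval b = (b.toNat : ℝ) := by
  cases b <;> simp [bval]

lemma X_lt (n : ℕ) (t : Fin n → Bool) : X n t < 2 ^ n := by
  induction n with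
  | zero => simp [X]
  | succ n ih =>
    have := ih (fun i => t i.castSucc)
    simp only [X, pow_succ]
    cases t (Fin.last n) <;> simp <;> omega

lemma pts (s : ℕ → Bool) (n : ℕ) (t : Fin n → Bool) :
    hammersleyShifted n (fun i => s i) t = ((X n t : ℝ) / 2 ^ n, (Y s n t : ℝ) / 2 ^ n) := by
  induction n with
  | zero => simp [hammersleyShifted, X, Y]
  | succ n ih =>
    have h := ih (fun i => t i.castSucc)
    simp only [hammersleyShifted, Prod.mk.injEq] at h ⊢
    obtain ⟨h1, h2⟩ := h
    constructor
    · rw [Fin.sum_univ_castSucc]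
      have : ∀ i : Fin n, bval (t i.castSucc) / 2 ^ (n + 1 - (i.castSucc : Fin (n+1)).val)
          = (1/2) * (bval (t i.castSucc) / 2 ^ (n - i.val)) := by
        intro i
        have hi : n + 1 - (i.castSucc : Fin (n+1)).val = (n - i.val) + 1 := by
          have := i.2
          simp only [Fin.val_castSucc]; omega
        rw [hi, pow_succ]; field_simp
      rw [Finset.sum_congr rfl (fun i _ => this i), ← Finset.mul_sum, h1]
      simp only [X, Fin.val_last, bval_eq]
      push_cast
      simp only [Nat.add_sub_cancel_left, pow_succ]
      field_simp
    · rw [Fin.sum_univ_castSucc]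
      simp only [Fin.val_castSucc, Fin.val_last]
      rw [h2]
      simp only [Y, bval_eq]
      push_cast
      simp only [pow_succ]
      field_simp

noncomputable def A (s : ℕ → Bool) (n a b : ℕ) : ℝ :=
  ∑ t : Fin n → Bool, if X n t < a ∧ Y s n t < b then 1 else 0

noncomputable def B (s : ℕ → Bool) (n b : ℕ) : ℝ :=
  ∑ t : Fin n → Bool, if Y s n t < b then 1 else 0

noncomputable def Bx (n b : ℕ) : ℝ :=
  ∑ t : Fin n → Bool, if X n t < b then 1 else 0

lemma sum_succ (n : ℕ) (f : (Fin (n+1) → Bool) → ℝ) :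
    ∑ t, f t = ∑ t : Fin n → Bool, f (Fin.snoc (α := fun _ => Bool) t false)
      + ∑ t : Fin n → Bool, f (Fin.snoc (α := fun _ => Bool) t true) := by
  rw [← (Fin.snocEquiv (fun _ : Fin (n+1) => Bool)).sum_comp, Fintype.sum_prod_type,
    Fintype.sum_bool, add_comm]
  rfl

lemma X_snoc (n : ℕ) (t : Fin n → Bool) (c : Bool) :
    X (n+1) (Fin.snoc (α := fun _ => Bool) t c) = X n t + c.toNat * 2 ^ n := by
  simp [X]

lemma Y_snoc (s : ℕ → Bool) (n : ℕ) (t : Fin n → Bool) (c : Bool) :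
    Y s (n+1) (Fin.snoc (α := fun _ => Bool) t c) = 2 * Y s n t + (c != s n).toNat := by
  simp [Y]

lemma B_eq (s : ℕ → Bool) (n b : ℕ) (hb : b ≤ 2 ^ n) : B s n b = b := by
  induction n generalizing b with
  | zero =>
    have : b = 0 ∨ b = 1 := by simp at hb; omega
    rcases this with rfl | rfl <;> simp [B, Y]
  | succ n ih =>
    rw [pow_succ] at hb
    have key : B s (n+1) b = B s n (b / 2) + B s n ((b + 1) / 2) := by
      simp only [B]
      rw [sum_succ]
      simp only [Y_snoc]
      have e0 : ∀ t : Fin n → Bool, (2 * Y s n t + 0 < b) ↔ Y s n t < (b + 1) / 2 := by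
        intro t; omega
      have e1 : ∀ t : Fin n → Bool, (2 * Y s n t + 1 < b) ↔ Y s n t < b / 2 := by
        intro t; omega
      cases h : s n
      · simp only [bne_self_eq_false, Bool.toNat_false, e0, Bool.true_bne, Bool.not_false,
          Bool.toNat_true, e1]
        ring
      · simp only [bne_self_eq_false, Bool.toNat_false, e0, Bool.false_bne,
          Bool.toNat_true, e1]
    rw [key, ih _ (by omega), ih _ (by omega), ← Nat.cast_add]
    congr 1; omega

lemma Bx_eq (n b : ℕ) (hb : b ≤ 2 ^ n) : Bx n b = b := by
  induction n generalizing b with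
  | zero =>
    have : b = 0 ∨ b = 1 := by simp at hb; omega
    rcases this with rfl | rfl <;> simp [Bx, X]
  | succ n ih =>
    rw [pow_succ] at hb
    have key : Bx (n+1) b = Bx n (min b (2^n)) + Bx n (b - 2^n) := by
      simp only [Bx]
      rw [sum_succ]
      simp only [X_snoc]
      have e0 : ∀ t : Fin n → Bool, (X n t + 0 * 2^n < b) ↔ X n t < min b (2^n) := by
        intro t; have := X_lt n t; simp; omega
      have e1 : ∀ t : Fin n → Bool, (X n t + 1 * 2^n < b) ↔ X n t < b - 2^n := by
        intro t; omega
      simp only [Bool.toNat_false, Bool.toNat_true, e0, e1]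
    rw [key, ih _ (by omega), ih _ (by omega), ← Nat.cast_add]
    congr 1; omega

noncomputable def D (s : ℕ → Bool) (n a b : ℕ) : ℝ := A s n a b - a * b / 2 ^ n

lemma A_succ (s : ℕ → Bool) (n a b : ℕ) :
    A s (n+1) a b = A s n a ((b + (!(s n)).toNat) / 2)
      + A s n (a - 2^n) ((b + (s n).toNat) / 2) := by
  simp only [A]
  rw [sum_succ]
  simp only [X_snoc, Y_snoc]
  have e0 : ∀ t : Fin n → Bool, (2 * Y s n t + 0 < b) ↔ Y s n t < (b + 1) / 2 := by
    intro t; omega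
  have e1 : ∀ t : Fin n → Bool, (2 * Y s n t + 1 < b) ↔ Y s n t < (b + 0) / 2 := by
    intro t; omega
  have e2 : ∀ t : Fin n → Bool, (X n t + 1 * 2^n < a) ↔ X n t < a - 2^n := by
    intro t; omega
  cases h : s n
  · simp only [bne_self_eq_false, Bool.toNat_false, e0, Bool.true_bne, Bool.not_false,
      Bool.toNat_true, e1, e2, zero_mul]
    simp only [add_zero]
  · simp only [bne_self_eq_false, Bool.toNat_false, e0, Bool.false_bne, Bool.not_true,
      Bool.toNat_true, e1, e2, zero_mul]
    simp only [add_zero]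

lemma A_zero (s : ℕ → Bool) (n b : ℕ) : A s n 0 b = 0 := by simp [A]

lemma A_full (s : ℕ → Bool) (n a b : ℕ) (ha : 2 ^ n ≤ a) (hb : b ≤ 2 ^ n) : A s n a b = b := by
  rw [← B_eq s n b hb]
  simp only [A, B]
  refine Finset.sum_congr rfl fun t _ => ?_
  have := X_lt n t
  have h : X n t < a := by omega
  simp [h]

/-- recursion, low half -/
lemma A_low (s : ℕ → Bool) (n a b : ℕ) (ha : a < 2 ^ n) :
    A s (n+1) a b = A s n a ((b + (!(s n)).toNat) / 2) := by
  rw [A_succ, Nat.sub_eq_zero_of_le ha.le, A_zero, add_zero]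

lemma A_high (s : ℕ → Bool) (n a b : ℕ) (hb : (b + (!(s n)).toNat) / 2 ≤ 2 ^ n) :
    A s (n+1) (a + 2 ^ n) b = ((b + (!(s n)).toNat) / 2 : ℕ) + A s n a ((b + (s n).toNat) / 2) := by
  rw [A_succ, A_full _ _ _ _ (by omega) hb, Nat.add_sub_cancel]

lemma D_even (s : ℕ → Bool) (n a b : ℕ) (ha : a < 2 ^ (n+1)) (hb : b ≤ 2 ^ n) :
    D s (n+1) a (2*b) = D s n (a % 2^n) b := by
  have h0 : (2 * b + 0) / 2 = b := by omega
  have h1 : (2 * b + 1) / 2 = b := by omega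
  by_cases h : a < 2 ^ n
  · rw [Nat.mod_eq_of_lt h, D, D, A_low _ _ _ _ h]
    cases s n <;> simp only [Bool.not_false, Bool.not_true, Bool.toNat_true, Bool.toNat_false, h0, h1] <;>
      push_cast <;> rw [pow_succ] <;> field_simp
  · obtain ⟨a', rfl⟩ : ∃ a', a = a' + 2^n := ⟨a - 2^n, by omega⟩
    have ha' : a' < 2^n := by rw [pow_succ] at ha; omega
    rw [Nat.add_mod_right, Nat.mod_eq_of_lt ha', D, D, A_high]
    · cases s n <;> simp only [Bool.not_false, Bool.not_true, Bool.toNat_true, Bool.toNat_false, h0, h1] <;>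
        push_cast <;> rw [pow_succ] <;> field_simp <;> ring
    · cases s n <;> simp only [Bool.not_false, Bool.not_true, Bool.toNat_true, Bool.toNat_false, h0, h1] <;> exact hb

lemma D_odd (s s' : ℕ → Bool) (hs' : ∀ i, s' i = !(s i)) (n a : ℕ) (ha : a < 2 ^ (n+1))
    (h : ((a < 2^n) ↔ s n = false)) :
    ∃ e : ℝ, |e| ≤ 1/2 ∧ ∀ b, b < 2 ^ n →
      D s (n+1) a (2*b+1) = D s n (a % 2^n) (b+1) + e ∧
      D s' (n+1) a (2*b+1) = D s' n (a % 2^n) b - e := by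
  have h0 : ∀ b, (2 * b + 1 + 0) / 2 = b := by intro b; omega
  have h1 : ∀ b, (2 * b + 1 + 1) / 2 = b + 1 := by intro b; omega
  by_cases hh : a < 2 ^ n
  · have hsn := h.1 hh
    have hsn' : s' n = true := by rw [hs', hsn]; rfl
    have hq : (a : ℝ) < 2 ^ n := by exact_mod_cast hh
    refine ⟨1/2 * (a / 2^n), ?_, fun b hb => ?_⟩
    · rw [abs_of_nonneg (by positivity)]
      have : (a : ℝ) / 2^n ≤ 1 := by rw [div_le_one (by positivity)]; exact hq.le
      linarith
    · rw [Nat.mod_eq_of_lt hh, D, D, D, D, A_low _ _ _ _ hh, A_low _ _ _ _ hh, hsn, hsn']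
      simp only [Bool.not_false, Bool.not_true, Bool.toNat_true, Bool.toNat_false, h0, h1]
      push_cast
      rw [pow_succ]
      constructor <;> field_simp <;> ring
  · have hsn : s n = true := by
      cases hc : s n
      · exact absurd (h.2 hc) hh
      · rfl
    have hsn' : s' n = false := by rw [hs', hsn]; rfl
    obtain ⟨a', rfl⟩ : ∃ a', a = a' + 2^n := ⟨a - 2^n, by omega⟩
    have ha' : a' < 2^n := by rw [pow_succ] at ha; omega
    have hq : (a' : ℝ) < 2 ^ n := by exact_mod_cast ha'
    have hq1 : (a' : ℝ) / 2^n ≤ 1 := by rw [div_le_one (by positivity)]; exact hq.le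
    have hq0 : 0 ≤ (a' : ℝ) / 2^n := by positivity
    refine ⟨-(1/2 * (1 - a' / 2^n)), ?_, fun b hb => ?_⟩
    · rw [abs_le]; constructor <;> linarith
    · rw [Nat.add_mod_right, Nat.mod_eq_of_lt ha', D, D, D, D, A_high, A_high, hsn, hsn']
      · simp only [Bool.not_false, Bool.not_true, Bool.toNat_true, Bool.toNat_false, h0, h1]
        push_cast
        rw [pow_succ]
        constructor <;> field_simp <;> ring
      · rw [hsn']; simp only [Bool.not_false, Bool.toNat_true, h1]; omega
      · rw [hsn]; simp only [Bool.not_true, Bool.toNat_false, h0]; omega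

lemma D_diff (s : ℕ → Bool) (n a b : ℕ) (ha : a < 2 ^ n) (hb : b < 2 ^ n) :
    |D s n a (b+1) - D s n a b| ≤ 1 := by
  have hq : (a : ℝ) < 2 ^ n := by exact_mod_cast ha
  have hq1 : (a : ℝ) / 2^n ≤ 1 := by rw [div_le_one (by positivity)]; exact hq.le
  have hq0 : 0 ≤ (a : ℝ) / 2^n := by positivity
  have h1 : A s n a b ≤ A s n a (b+1) := by
    refine Finset.sum_le_sum fun t _ => ?_
    split_ifs <;> first | omega | norm_num
  have h2 : A s n a (b+1) - A s n a b ≤ B s n (b+1) - B s n b := by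
    simp only [A, B]
    rw [← Finset.sum_sub_distrib, ← Finset.sum_sub_distrib]
    refine Finset.sum_le_sum fun t _ => ?_
    split_ifs <;> first | omega | norm_num
  rw [B_eq _ _ _ hb.le, B_eq _ _ _ hb] at h2
  push_cast at h2
  have : D s n a (b+1) - D s n a b = A s n a (b+1) - A s n a b - a / 2^n := by
    simp only [D]; push_cast; ring
  rw [this, abs_le]; constructor <;> linarith

lemma A_up (s : ℕ → Bool) (n a b : ℕ) (ha : a < 2 ^ n) (hb : b < 2 ^ n) :
    A s n (a+1) (b+1) ≤ A s n a b + 2 := by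
  have h2 : A s n (a+1) (b+1) - A s n a b ≤ (B s n (b+1) - B s n b) + (Bx n (a+1) - Bx n a) := by
    simp only [A, B, Bx]
    rw [← Finset.sum_sub_distrib, ← Finset.sum_sub_distrib, ← Finset.sum_sub_distrib,
      ← Finset.sum_add_distrib]
    refine Finset.sum_le_sum fun t _ => ?_
    split_ifs <;> first | omega | norm_num
  rw [B_eq _ _ _ hb.le, B_eq _ _ _ hb, Bx_eq _ _ ha.le, Bx_eq _ _ ha] at h2
  push_cast at h2
  linarith

/-- four-term sum with corrector -/
noncomputable def Z (s s' : ℕ → Bool) (c : ℝ) (n a b : ℕ) : ℝ :=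
  D s n a b + D s n a (b+1) + D s' n a b + D s' n a (b+1)
    + c * ((D s' n a (b+1) - D s' n a b) - (D s n a (b+1) - D s n a b))

lemma Z_swap (s s' : ℕ → Bool) (c : ℝ) (n a b : ℕ) : Z s s' c n a b = Z s' s (-c) n a b := by
  simp only [Z]; ring

lemma sum_even_odd (f : ℕ → ℝ) (N : ℕ) :
    ∑ b ∈ Finset.range (2 * N), f b = ∑ b ∈ Finset.range N, (f (2*b) + f (2*b+1)) := by
  induction N with
  | zero => simp
  | succ N ih =>
    rw [Finset.sum_range_succ, ← ih, show 2 * (N+1) = 2*N+1+1 by ring, Finset.sum_range_succ,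
      Finset.sum_range_succ]
    ring

lemma exp_pair (l m h : ℝ) (hh : |h| ≤ 3) :
    Real.exp (l * (m + h)) + Real.exp (l * (m - h)) ≤
      2 * Real.exp (9/2 * l^2) * Real.exp (l * m) := by
  have h1 : Real.exp (l * (m + h)) + Real.exp (l * (m - h)) =
      2 * Real.cosh (l*h) * Real.exp (l*m) := by
    rw [Real.cosh_eq, mul_add, mul_sub, Real.exp_add, sub_eq_add_neg, Real.exp_add]
    ring
  have h3 : h^2 ≤ 9 := by
    rw [abs_le] at hh; nlinarith [hh.1, hh.2]
  rw [h1]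
  gcongr
  refine (Real.cosh_le_exp_half_sq _).trans (Real.exp_le_exp.2 ?_)
  nlinarith [sq_nonneg l]

/-- one step in the good orientation -/
lemma step (s s' : ℕ → Bool) (hs' : ∀ i, s' i = !(s i)) (n a : ℕ) (ha : a < 2 ^ (n+1))
    (h : ((a < 2^n) ↔ s n = false)) (c l : ℝ) (hc : |c| ≤ 1) (b : ℕ) (hb : b < 2 ^ n) :
    Real.exp (l * Z s s' c (n+1) a (2*b)) + Real.exp (l * Z s s' c (n+1) a (2*b+1)) ≤
     2 * Real.exp (9/2 * l^2) * Real.exp (l * Z s s' ((c-1)/2) n (a % 2^n) b) := by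
  obtain ⟨e, he, H⟩ := D_odd s s' hs' n a ha h
  obtain ⟨o1, o2⟩ := H b hb
  have e1 := D_even s n a b ha hb.le
  have e2 := D_even s' n a b ha hb.le
  have e3 := D_even s n a (b+1) ha hb
  have e4 := D_even s' n a (b+1) ha hb
  have hm : a % 2^n < 2^n := Nat.mod_lt _ (by positivity)
  have d1 := D_diff s n (a % 2^n) b hm hb
  have d2 := D_diff s' n (a % 2^n) b hm hb
  have r : 2 * b + 1 + 1 = 2 * (b+1) := by ring
  simp only [Z]
  rw [r, o1, o2, e1, e2, e3, e4]
  generalize D s n (a % 2^n) b = u at *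
  generalize D s n (a % 2^n) (b+1) = v at *
  generalize D s' n (a % 2^n) b = u' at *
  generalize D s' n (a % 2^n) (b+1) = v' at *
  set dd := (v - u) + (v' - u') with hdd
  set h' : ℝ := (-dd - c * (dd + 4 * e)) / 2 with hh'
  have hdd2 : |dd| ≤ 2 := (abs_add_le _ _).trans (by linarith)
  have hB : |h'| ≤ 3 := by
    have t1 : |dd + 4 * e| ≤ 4 := by
      refine (abs_add_le _ _).trans ?_
      rw [abs_mul]; norm_num; linarith
    have t2 : |c * (dd + 4*e)| ≤ 4 := by
      rw [abs_mul]; nlinarith [abs_nonneg c, abs_nonneg (dd + 4*e)]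
    rw [hh', abs_le]; rw [abs_le] at hdd2 t2; constructor <;> linarith [hdd2.1, hdd2.2, t2.1, t2.2]
  convert exp_pair l _ h' hB using 3
  · rw [hh', hdd]; ring_nf
  · rw [hh', hdd]; ring_nf

lemma mgf (s s' : ℕ → Bool) (hs' : ∀ i, s' i = !(s i)) (l : ℝ) (n : ℕ) :
    ∀ a, a < 2 ^ n → ∀ c : ℝ, |c| ≤ 1 →
    ∑ b ∈ Finset.range (2^n), Real.exp (l * Z s s' c n a b) ≤ 2 ^ n * Real.exp (9/2 * l^2 * n) := by
  induction n with
  | zero =>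
    intro a ha c hc
    have : a = 0 := by simpa using ha
    subst this
    simp [Z, D, A]
  | succ n ih =>
    intro a ha c hc
    have hm : a % 2^n < 2^n := Nat.mod_lt _ (by positivity)
    have hs : ∀ i, s i = !(s' i) := by intro i; rw [hs']; simp
    rw [abs_le] at hc
    rw [pow_succ, mul_comm (2^n) 2, sum_even_odd]
    have key : ∃ c' : ℝ, |c'| ≤ 1 ∧ ∀ b ∈ Finset.range (2^n),
        Real.exp (l * Z s s' c (n+1) a (2*b)) + Real.exp (l * Z s s' c (n+1) a (2*b+1)) ≤
        2 * Real.exp (9/2 * l^2) * Real.exp (l * Z s s' c' n (a % 2^n) b) := by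
      by_cases h : ((a < 2^n) ↔ s n = false)
      · refine ⟨(c-1)/2, ?_, fun b hb => step s s' hs' n a ha h c l (abs_le.2 hc) b (Finset.mem_range.1 hb)⟩
        rw [abs_le]; constructor <;> linarith [hc.1, hc.2]
      · have h' : ((a < 2^n) ↔ s' n = false) := by
          rw [hs']; cases hh : s n <;> simp_all
        refine ⟨-((-c-1)/2), ?_, fun b hb => ?_⟩
        · rw [abs_le]; constructor <;> linarith [hc.1, hc.2]
        · have := step s' s hs n a ha h' (-c) l (by rw [abs_neg]; exact abs_le.2 hc) b (Finset.mem_range.1 hb)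
          rw [Z_swap s s' c, Z_swap s s' c, Z_swap s s' _ n, neg_neg]
          exact this
    obtain ⟨c', hc', H⟩ := key
    refine (Finset.sum_le_sum H).trans ?_
    rw [← Finset.mul_sum]
    refine (mul_le_mul_of_nonneg_left (ih _ hm c' hc') (by positivity)).trans (le_of_eq ?_)
    push_cast
    rw [mul_add (9/2 * l^2), Real.exp_add, mul_one]
    ring

lemma count_eq (s : ℕ → Bool) (n : ℕ) (σ : Fin n → Bool) (hσ : ∀ i : Fin n, σ i = s i) (t : ℝ × ℝ) :
    (countIn (hammersleySym n σ) t : ℝ) =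
      (∑ k : Fin n → Bool, if (X n k : ℝ) < 2^n * t.1 ∧ (Y s n k : ℝ) < 2^n * t.2 then (1:ℝ) else 0) +
      ∑ k : Fin n → Bool, if (X n k : ℝ) < 2^n * t.1 ∧ (Y (fun i => !(s i)) n k : ℝ) < 2^n * t.2
        then (1:ℝ) else 0 := by
  have h1 : σ = fun i : Fin n => s i := funext hσ
  subst h1
  have hp1 := pts s n
  have hp2 := pts (fun i => !(s i)) n
  rw [countIn, Finset.card_filter]
  push_cast
  rw [Fintype.sum_prod_type, Fintype.sum_bool, add_comm]
  have e : ∀ (x : ℕ) (y : ℝ), (x : ℝ) / 2^n < y ↔ (x : ℝ) < 2^n * y := by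
    intro x y; rw [div_lt_iff₀ (by positivity), mul_comm]
  have e' : ∀ (x : ℕ), (0 : ℝ) ≤ (x : ℝ) / 2^n := by intro x; positivity
  simp only [hammersleySym, hp1, hp2, e, e', if_true, true_and, Bool.false_eq_true, if_false]

lemma half_bound (s : ℕ → Bool) (n a b : ℕ) (ha : a < 2 ^ n) (hb : b < 2 ^ n) (x y : ℝ)
    (hax : (a : ℝ) ≤ x) (hxa : x < a + 1) (hby : (b : ℝ) ≤ y) (hyb : y < b + 1) :
    |(∑ k : Fin n → Bool, if (X n k : ℝ) < x ∧ (Y s n k : ℝ) < y then (1:ℝ) else 0)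
      - x * y / 2^n - D s n a b| ≤ 3 := by
  set S := ∑ k : Fin n → Bool, if (X n k : ℝ) < x ∧ (Y s n k : ℝ) < y then (1:ℝ) else 0 with hS
  have h1 : A s n a b ≤ S := by
    refine Finset.sum_le_sum fun k _ => ?_
    by_cases h : X n k < a ∧ Y s n k < b
    · have h1 : (X n k : ℝ) < a := by exact_mod_cast h.1
      have h2 : (Y s n k : ℝ) < b := by exact_mod_cast h.2
      rw [if_pos h, if_pos ⟨h1.trans_le hax, h2.trans_le hby⟩]
    · rw [if_neg h]; split_ifs <;> norm_num
  have h2 : S ≤ A s n (a+1) (b+1) := by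
    refine Finset.sum_le_sum fun k _ => ?_
    by_cases h : (X n k : ℝ) < x ∧ (Y s n k : ℝ) < y
    · have h1 : (X n k : ℝ) < (a + 1 : ℕ) := by push_cast; linarith [h.1]
      have h2 : (Y s n k : ℝ) < (b + 1 : ℕ) := by push_cast; linarith [h.2]
      rw [if_pos h, if_pos ⟨by exact_mod_cast h1, by exact_mod_cast h2⟩]
    · rw [if_neg h]; split_ifs <;> norm_num
  have h3 := A_up s n a b ha hb
  have ha1 : (a : ℝ) + 1 ≤ 2^n := by exact_mod_cast ha
  have hb1 : (b : ℝ) + 1 ≤ 2^n := by exact_mod_cast hb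
  have ha0 : (0 : ℝ) ≤ a := by positivity
  have hb0 : (0 : ℝ) ≤ b := by positivity
  have hN : (0 : ℝ) < 2^n := by positivity
  have h4 : (a : ℝ) * b / 2^n ≤ x * y / 2^n := by
    have hx0 : 0 ≤ x := ha0.trans hax
    gcongr
  have h5 : x * y / 2^n ≤ a * b / 2^n + 2 := by
    rw [div_add' _ _ _ hN.ne', div_le_div_iff_of_pos_right hN]
    nlinarith
  simp only [D]
  rw [abs_le]; constructor <;> linarith

lemma local_bound (s : ℕ → Bool) (n : ℕ) (σ : Fin n → Bool) (hσ : ∀ i : Fin n, σ i = s i)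
    (t : ℝ × ℝ) (a b : ℕ) (ha : a < 2 ^ n) (hb : b < 2 ^ n)
    (hax : (a : ℝ) ≤ 2^n * t.1) (hxa : 2^n * t.1 < a + 1) (hby : (b : ℝ) ≤ 2^n * t.2)
    (hyb : 2^n * t.2 < b + 1) :
    |localDisc (hammersleySym n σ) t| ≤ (|Z s (fun i => !(s i)) 0 n a b| + 7) / 2^(n+1) := by
  have h1 := half_bound s n a b ha hb _ _ hax hxa hby hyb
  have h2 := half_bound (fun i => !(s i)) n a b ha hb _ _ hax hxa hby hyb
  have d1 := D_diff s n a b ha hb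
  have d2 := D_diff (fun i => !(s i)) n a b ha hb
  have hc := count_eq s n σ hσ t
  have hcard : (Fintype.card (Bool × (Fin n → Bool)) : ℝ) = 2^(n+1) := by
    simp [pow_succ, mul_comm]
  rw [localDisc, hcard, le_div_iff₀ (by positivity), ← abs_of_pos (show (0:ℝ) < 2^(n+1) by positivity),
    ← abs_mul, abs_of_pos (show (0:ℝ) < 2^(n+1) by positivity), sub_mul, div_mul_cancel₀ _ (by positivity), hc]
  have r : t.1 * t.2 * 2^(n+1) = 2^n * t.1 * (2^n * t.2) / 2^n + 2^n * t.1 * (2^n * t.2) / 2^n := by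
    rw [pow_succ]; field_simp; ring
  rw [r]
  simp only [Z]
  generalize 2^n * t.1 * (2^n * t.2) / 2^n = q at *
  generalize (∑ k : Fin n → Bool, if (X n k : ℝ) < 2^n * t.1 ∧ (Y s n k : ℝ) < 2^n * t.2 then (1:ℝ) else 0) = S1 at *
  generalize (∑ k : Fin n → Bool, if (X n k : ℝ) < 2^n * t.1 ∧ (Y (fun i => !(s i)) n k : ℝ) < 2^n * t.2
        then (1:ℝ) else 0) = S2 at *
  generalize D s n a b = u at *
  generalize D s n a (b+1) = v at *
  generalize D (fun i => !(s i)) n a b = u' at *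
  generalize D (fun i => !(s i)) n a (b+1) = v' at *
  rw [zero_mul, add_zero]
  rw [abs_le] at h1 h2 d1 d2
  have w1 := le_abs_self (u + v + u' + v')
  have w2 := neg_abs_le (u + v + u' + v')
  have w3 := abs_nonneg (u + v + u' + v')
  rw [abs_le]; constructor <;> linarith [h1.1, h1.2, h2.1, h2.2, d1.1, d1.2, d2.1, d2.2]

/-- integral over the square bounded by a step function -/
lemma step_integral (n : ℕ) (F : ℝ × ℝ → ℝ) (hF : ∀ t, 0 ≤ F t) (G : ℕ → ℕ → ℝ)
    (hG : ∀ a b, 0 ≤ G a b) (M : ℝ)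
    (hM : ∀ a, a < 2^n → ∑ b ∈ Finset.range (2^n), G a b ≤ 2^n * M)
    (hFG : ∀ (t : ℝ × ℝ) (a b : ℕ), a < 2 ^ n → b < 2 ^ n → (a : ℝ) ≤ 2^n * t.1 →
      2^n * t.1 < a + 1 → (b : ℝ) ≤ 2^n * t.2 → 2^n * t.2 < b + 1 → F t ≤ G a b) :
    ∫ t in Set.Icc (0 : ℝ × ℝ) 1, F t ≤ M := by
  have hN : (0 : ℝ) < 2^n := by positivity
  set Q : ℕ → ℕ → Set (ℝ × ℝ) := fun a b =>
    Set.Ico ((a:ℝ)/2^n) ((a+1:ℝ)/2^n) ×ˢ Set.Ico ((b:ℝ)/2^n) ((b+1:ℝ)/2^n) with hQ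
  have hQm : ∀ a b, MeasurableSet (Q a b) := fun a b => measurableSet_Ico.prod measurableSet_Ico
  have hQv : ∀ a b, volume (Q a b) = ENNReal.ofReal (1/2^n) * ENNReal.ofReal (1/2^n) := by
    intro a b
    rw [hQ, Measure.volume_eq_prod, Measure.prod_prod, Real.volume_Ico, Real.volume_Ico]
    congr 2 <;> ring
  have hQr : ∀ a b, volume.real (Q a b) = 1/2^n * (1/2^n) := by
    intro a b
    rw [Measure.real, hQv, ENNReal.toReal_mul, ENNReal.toReal_ofReal (by positivity)]
  have hQf : ∀ a b, volume (Q a b) ≠ ⊤ := by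
    intro a b; rw [hQv]; exact ENNReal.mul_ne_top ENNReal.ofReal_ne_top ENNReal.ofReal_ne_top
  set g : ℝ × ℝ → ℝ := fun t => ∑ a ∈ Finset.range (2^n), ∑ b ∈ Finset.range (2^n),
    (Q a b).indicator (fun _ => G a b) t with hg
  have hint : ∀ a b, Integrable ((Q a b).indicator (fun _ => G a b)) volume := by
    intro a b
    exact (integrableOn_const (hQf a b)).integrable_indicator (hQm a b)
  have hgi : Integrable g volume :=
    integrable_finsetSum _ fun a _ => integrable_finsetSum _ fun b _ => hint a b
  have hnn : ∀ a b t, 0 ≤ (Q a b).indicator (fun _ => G a b) t :=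
    fun a b t => Set.indicator_nonneg (fun _ _ => hG a b) t
  have hg0 : ∀ t, 0 ≤ g t := fun t =>
    Finset.sum_nonneg fun a _ => Finset.sum_nonneg fun b _ => hnn a b t
  have hgI : ∫ t, g t ≤ M := by
    rw [hg, integral_finsetSum _ (fun a _ => integrable_finsetSum _ fun b _ => hint a b)]
    have : ∀ a ∈ Finset.range (2^n), ∫ t, ∑ b ∈ Finset.range (2^n),
        (Q a b).indicator (fun _ => G a b) t ≤ 1/2^n * M := by
      intro a ha
      rw [integral_finsetSum _ (fun b _ => hint a b)]
      have e : ∀ b, ∫ t, (Q a b).indicator (fun _ => G a b) t = 1/2^n * (1/2^n) * G a b := by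
        intro b
        rw [integral_indicator (hQm a b), setIntegral_const, hQr, smul_eq_mul]
      simp only [e]
      rw [← Finset.mul_sum]
      refine (mul_le_mul_of_nonneg_left (hM a (Finset.mem_range.1 ha)) (by positivity)).trans (le_of_eq ?_)
      field_simp
    refine (Finset.sum_le_sum this).trans (le_of_eq ?_)
    rw [Finset.sum_const, Finset.card_range, nsmul_eq_mul]
    push_cast; field_simp
  have hle : ∀ t ∈ Set.Ico (0:ℝ) 1 ×ˢ Set.Ico (0:ℝ) 1, F t ≤ g t := by
    rintro t ⟨⟨h1, h2⟩, ⟨h3, h4⟩⟩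
    have p1 : 0 ≤ 2^n * t.1 := by positivity
    have p2 : 0 ≤ 2^n * t.2 := by positivity
    set a := ⌊2^n * t.1⌋₊ with ha
    set b := ⌊2^n * t.2⌋₊ with hb
    have a1 : (a:ℝ) ≤ 2^n * t.1 := Nat.floor_le p1
    have a2 : 2^n * t.1 < a + 1 := Nat.lt_floor_add_one _
    have b1 : (b:ℝ) ≤ 2^n * t.2 := Nat.floor_le p2
    have b2 : 2^n * t.2 < b + 1 := Nat.lt_floor_add_one _
    have a3 : a < 2^n := by
      have : (a:ℝ) < 2^n := by nlinarith
      exact_mod_cast this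
    have b3 : b < 2^n := by
      have : (b:ℝ) < 2^n := by nlinarith
      exact_mod_cast this
    refine (hFG t a b a3 b3 a1 a2 b1 b2).trans ?_
    have hmem : t ∈ Q a b := by
      refine ⟨⟨?_, ?_⟩, ⟨?_, ?_⟩⟩
      · rw [div_le_iff₀ hN]; linarith
      · rw [lt_div_iff₀ hN]; linarith
      · rw [div_le_iff₀ hN]; linarith
      · rw [lt_div_iff₀ hN]; linarith
    calc G a b = (Q a b).indicator (fun _ => G a b) t := by rw [Set.indicator_of_mem hmem]
      _ ≤ ∑ b ∈ Finset.range (2^n), (Q a b).indicator (fun _ => G a b) t :=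
        Finset.single_le_sum (f := fun b => (Q a b).indicator (fun _ => G a b) t)
          (fun b _ => hnn a b t) (Finset.mem_range.2 b3)
      _ ≤ g t := Finset.single_le_sum
          (f := fun a => ∑ b ∈ Finset.range (2^n), (Q a b).indicator (fun _ => G a b) t)
          (fun a _ => Finset.sum_nonneg fun b _ => hnn a b t) (Finset.mem_range.2 a3)
  have hae : (Set.Icc (0 : ℝ × ℝ) 1 : Set (ℝ × ℝ)) =ᵐ[volume] Set.Ico (0:ℝ) 1 ×ˢ Set.Ico (0:ℝ) 1 := by
    have : (Set.Icc (0 : ℝ × ℝ) 1) = Set.Icc (0:ℝ) 1 ×ˢ Set.Icc (0:ℝ) 1 := by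
      rw [Set.Icc_prod_Icc]; rfl
    rw [this, Measure.volume_eq_prod]
    exact (Measure.set_prod_ae_eq Ico_ae_eq_Icc Ico_ae_eq_Icc).symm
  rw [setIntegral_congr_set hae]
  calc ∫ t in Set.Ico (0:ℝ) 1 ×ˢ Set.Ico (0:ℝ) 1, F t
      ≤ ∫ t in Set.Ico (0:ℝ) 1 ×ˢ Set.Ico (0:ℝ) 1, g t := by
        refine integral_mono_of_nonneg (Filter.Eventually.of_forall hF) hgi.integrableOn ?_
        exact (ae_restrict_iff' (measurableSet_Ico.prod measurableSet_Ico)).2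
          (Filter.Eventually.of_forall hle)
    _ ≤ ∫ t, g t := setIntegral_le_integral hgi (Filter.Eventually.of_forall hg0)
    _ ≤ M := hgI

lemma rpow_le_exp (p z : ℝ) (hp : 0 < p) (hz : 0 ≤ z) : z ^ p ≤ p ^ p * Real.exp z := by
  have h1 : z / p ≤ Real.exp (z / p) := by linarith [Real.add_one_le_exp (z/p)]
  have h2 : (z / p) ^ p ≤ (Real.exp (z/p)) ^ p := Real.rpow_le_rpow (by positivity) h1 hp.le
  rw [← Real.exp_mul, div_mul_cancel₀ _ hp.ne', Real.div_rpow hz hp.le,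
    div_le_iff₀ (by positivity)] at h2
  linarith

end HS

/-- The symmetrized digit shifted Hammersley point set (with `N = 2^(n+1)` points)
has optimal `L_p`-discrepancy `≪ √(log N)/N`, independently of the shift `σ`. -/
theorem statement2 (p : ℝ) (hp : 1 < p) :
    ∃ C : ℝ, 0 < C ∧ ∀ n : ℕ, 0 < n → ∀ σ : Fin n → Bool,
      LpDisc p (hammersleySym n σ) ≤
        C * Real.sqrt (Real.log ((2 : ℝ) ^ (n + 1))) / 2 ^ (n + 1) := by
  have hp0 : 0 < p := by linarith
  set K : ℝ := p ^ p * (Real.exp 7 * (2 * Real.exp (9/2))) with hK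
  have hKpos : 0 < K := by positivity
  refine ⟨2 * K ^ (1/p), by positivity, fun n hn σ => ?_⟩
  set s : ℕ → Bool := fun i => if h : i < n then σ ⟨i, h⟩ else false with hs
  have hσ : ∀ i : Fin n, σ i = s i := by intro i; simp [hs]
  set s' : ℕ → Bool := fun i => !(s i) with hs'
  have hn1 : (1:ℝ) ≤ n := by exact_mod_cast hn
  set r := Real.sqrt n with hr
  have hr1 : 1 ≤ r := by rw [hr]; exact Real.one_le_sqrt.2 hn1
  have hr2 : r ^ 2 = n := Real.sq_sqrt (by positivity)
  have hr0 : 0 < r := by linarith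
  set q : ℝ := r / 2^(n+1) with hq
  have hq0 : 0 < q := by positivity
  set W : ℕ → ℕ → ℝ := HS.Z s s' 0 n with hW
  have hmgf : ∀ l : ℝ, l^2 = 1 / r^2 → ∀ a, a < 2^n →
      ∑ b ∈ Finset.range (2^n), Real.exp (l * W a b) ≤ 2^n * Real.exp (9/2) := by
    intro l hl a ha
    have := HS.mgf s s' (fun i => rfl) l n a ha 0 (by simp)
    rw [hl, hr2] at this
    convert this using 3
    field_simp
  have hmain : ∫ t in Set.Icc (0 : ℝ × ℝ) 1, |localDisc (hammersleySym n σ) t| ^ p ≤ q ^ p * K := by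
    refine HS.step_integral n _ (fun t => by positivity)
      (fun a b => q ^ p * (p ^ p * (Real.exp 7 * (Real.exp (1/r * W a b) + Real.exp (-(1/r) * W a b)))))
      (fun a b => by positivity) _ ?_ ?_
    · intro a ha
      rw [← Finset.mul_sum, ← Finset.mul_sum, ← Finset.mul_sum, Finset.sum_add_distrib]
      have h1 := hmgf (1/r) (by rw [div_pow, one_pow]) a ha
      have h2 := hmgf (-(1/r)) (by rw [neg_sq, div_pow, one_pow]) a ha
      calc _ ≤ q ^ p * (p ^ p * (Real.exp 7 * (2^n * Real.exp (9/2) + 2^n * Real.exp (9/2)))) := by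
            gcongr
        _ = _ := by rw [hK]; ring
    · intro t a b ha hb h1 h2 h3 h4
      have hl := HS.local_bound s n σ hσ t a b ha hb h1 h2 h3 h4
      have e1 : (|W a b| + 7) / 2^(n+1) = q * ((|W a b| + 7) / r) := by
        rw [hq]; field_simp
      change _ ≤ (|W a b| + 7) / 2^(n+1) at hl
      rw [e1] at hl
      have e2 := Real.rpow_le_rpow (abs_nonneg _) hl hp0.le
      refine e2.trans ?_
      rw [Real.mul_rpow hq0.le (by positivity)]
      refine mul_le_mul_of_nonneg_left ?_ (by positivity)
      refine (HS.rpow_le_exp p _ hp0 (by positivity)).trans ?_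
      refine mul_le_mul_of_nonneg_left ?_ (by positivity)
      have e3 : (|W a b| + 7) / r ≤ 7 + 1/r * |W a b| := by
        have : 7 / r ≤ 7 := div_le_self (by norm_num) hr1
        rw [add_div]
        have : |W a b| / r = 1 / r * |W a b| := by ring
        linarith
      refine (Real.exp_le_exp.2 e3).trans ?_
      rw [Real.exp_add]
      refine mul_le_mul_of_nonneg_left ?_ (by positivity)
      rcases abs_choice (W a b) with h | h <;> rw [h]
      · linarith [Real.exp_pos (-(1/r) * W a b)]
      · rw [mul_neg, ← neg_mul]; linarith [Real.exp_pos ((1/r) * W a b)]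
  have hL : LpDisc p (hammersleySym n σ) ≤ q * K ^ (1/p) := by
    rw [LpDisc]
    have h0 : 0 ≤ ∫ t in Set.Icc (0 : ℝ × ℝ) 1, |localDisc (hammersleySym n σ) t| ^ p :=
      integral_nonneg fun t => by positivity
    refine (Real.rpow_le_rpow h0 hmain (by positivity)).trans (le_of_eq ?_)
    rw [Real.mul_rpow (by positivity) hKpos.le, ← Real.rpow_mul hq0.le, mul_one_div_cancel hp0.ne',
      Real.rpow_one]
  refine hL.trans ?_
  have hlog : r ≤ 2 * Real.sqrt (Real.log ((2:ℝ)^(n+1))) := by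
    have : (n:ℝ) ≤ 2^2 * Real.log ((2:ℝ)^(n+1)) := by
      rw [Real.log_pow]; push_cast
      nlinarith [Real.log_two_gt_d9]
    calc r ≤ Real.sqrt (2^2 * Real.log ((2:ℝ)^(n+1))) := Real.sqrt_le_sqrt this
      _ = _ := by rw [Real.sqrt_mul (by positivity), Real.sqrt_sq (by norm_num)]
  calc q * K ^ (1/p) = K ^ (1/p) * r / 2^(n+1) := by rw [hq]; ring
    _ ≤ K ^ (1/p) * (2 * Real.sqrt (Real.log ((2:ℝ)^(n+1)))) / 2^(n+1) := by gcongr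
    _ = _ := by ring
end

section
/- Let p ∈ (1,∞). There exists a constant C_p > 0 such that for all n ∈ ℕ and all shifts σ ∈ {0,1}^n, the L_p-discrepancy of the multiset ~R_{n,σ}^{sym} with N = 2^{n+1} points (counted with multiplicity) satisfies L_{p,N}(~R_{n,σ}^{sym}) ≤ C_p · √(log N)/N, independently of σ. -/
open MeasureTheory

def xN : (n : ℕ) → (Fin n → Bool) → ℕ
  | 0, _ => 0
  | n+1, t => xN n (Fin.init t) + (t (Fin.last n)).toNat * 2^n

def yN : (n : ℕ) → (Fin n → Bool) → ℕ
  | 0, _ => 0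
  | n+1, t => 2 * yN n (Fin.init t) + (t (Fin.last n)).toNat

def bx {n : ℕ} (t σ : Fin n → Bool) : Fin n → Bool := fun i => t i != σ i

lemma xN_eq (n : ℕ) (t : Fin n → Bool) :
    ∑ i : Fin n, bval (t i) / 2 ^ (n - i.val) = (xN n t : ℝ) / 2 ^ n := by
  induction n with
  | zero => simp [xN]
  | succ n ih =>
    rw [Fin.sum_univ_castSucc]
    have h1 : ∀ i : Fin n, bval (t i.castSucc) / 2 ^ (n + 1 - (i.castSucc).val)
        = (bval (Fin.init t i) / 2 ^ (n - i.val)) / 2 := by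
      intro i
      have : n + 1 - i.castSucc.val = (n - i.val) + 1 := by
        have := i.2
        simp only [Fin.val_castSucc]; omega
      rw [this, pow_succ, div_div]; rfl
    rw [Finset.sum_congr rfl (fun i _ => h1 i), ← Finset.sum_div, ih]
    simp only [xN, Fin.val_last]
    have h2 : n + 1 - n = 1 := by omega
    rw [h2]
    have h3 : (2:ℝ)^n ≠ 0 := by positivity
    cases t (Fin.last n) <;> simp [bval] <;> field_simp <;> ring

lemma yN_eq (n : ℕ) (t : Fin n → Bool) :
    ∑ i : Fin n, bval (t i) / 2 ^ (i.val + 1) = (yN n t : ℝ) / 2 ^ n := by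
  induction n with
  | zero => simp [yN]
  | succ n ih =>
    rw [Fin.sum_univ_castSucc]
    have := ih (Fin.init t)
    simp only [Fin.init] at this
    simp only [Fin.val_castSucc, Fin.val_last]
    rw [this]
    simp only [yN]
    have h3 : (2:ℝ)^n ≠ 0 := by positivity
    cases t (Fin.last n) <;> simp [bval, Fin.init] <;> field_simp <;> ring

lemma hs_eq (n : ℕ) (σ t : Fin n → Bool) :
    hammersleyShifted n σ t = ((xN n t : ℝ) / 2^n, (yN n (bx t σ) : ℝ) / 2^n) := by
  unfold hammersleyShifted
  rw [xN_eq]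
  congr 1
  exact yN_eq n (bx t σ)

lemma xN_lt (n : ℕ) (t : Fin n → Bool) : xN n t < 2^n := by
  induction n with
  | zero => simp [xN]
  | succ n ih =>
    have := ih (Fin.init t)
    simp only [xN, pow_succ]
    cases t (Fin.last n) <;> simp <;> omega

lemma yN_lt (n : ℕ) (t : Fin n → Bool) : yN n t < 2^n := by
  induction n with
  | zero => simp [yN]
  | succ n ih =>
    have := ih (Fin.init t)
    simp only [yN, pow_succ]
    cases t (Fin.last n) <;> simp <;> omega

lemma yN_inj (n : ℕ) (a b : Fin n → Bool) (h : yN n a = yN n b) : a = b := by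
  induction n with
  | zero => exact Subsingleton.elim _ _
  | succ n ih =>
    simp only [yN] at h
    have h1 : a (Fin.last n) = b (Fin.last n) := by
      revert h
      cases a (Fin.last n) <;> cases b (Fin.last n) <;> simp <;> omega
    rw [h1] at h
    have h2 := ih (Fin.init a) (Fin.init b) (by omega)
    rw [← Fin.snoc_init_self a, ← Fin.snoc_init_self b, h1, h2]

lemma xN_surj (n : ℕ) (k : ℕ) (hk : k < 2^n) : ∃ a, xN n a = k := by
  induction n generalizing k with
  | zero => exact ⟨fun _ => false, by simp [xN] at *; omega⟩
  | succ n ih =>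
    by_cases h : k < 2^n
    · obtain ⟨a, ha⟩ := ih k h
      exact ⟨Fin.snoc a false, by simp [xN, ha]⟩
    · obtain ⟨a, ha⟩ := ih (k - 2^n) (by rw [pow_succ] at hk; omega)
      exact ⟨Fin.snoc a true, by simp [xN, ha]; omega⟩

lemma yN_surj (n : ℕ) (k : ℕ) (hk : k < 2^n) : ∃ a, yN n a = k := by
  induction n generalizing k with
  | zero => exact ⟨fun _ => false, by simp [yN] at *; omega⟩
  | succ n ih =>
    obtain ⟨a, ha⟩ := ih (k/2) (by rw [pow_succ] at hk; omega)
    rcases Nat.mod_two_eq_zero_or_one k with h | h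
    · exact ⟨Fin.snoc a false, by simp [yN, ha]; omega⟩
    · exact ⟨Fin.snoc a true, by simp [yN, ha]; omega⟩

lemma yN_not (n : ℕ) (σ t : Fin n → Bool) :
    yN n (bx t σ) + yN n (bx t (fun i => !(σ i))) + 1 = 2^n := by
  induction n with
  | zero => simp [yN]
  | succ n ih =>
    have h := ih (Fin.init σ) (Fin.init t)
    have e1 : Fin.init (bx t σ) = bx (Fin.init t) (Fin.init σ) := rfl
    have e2 : Fin.init (bx t (fun i => !(σ i))) = bx (Fin.init t) (fun i => !(Fin.init σ i)) := rfl
    simp only [yN, e1, e2, pow_succ]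
    simp only [bx] at *
    cases t (Fin.last n) <;> cases σ (Fin.last n) <;> simp <;> omega

lemma sum_snoc (n : ℕ) (f : (Fin (n+1) → Bool) → ℝ) :
    ∑ t, f t = ∑ t : Fin n → Bool, (f (Fin.snoc t false) + f (Fin.snoc t true)) := by
  rw [← (Fin.snocEquiv (fun _ : Fin (n+1) => Bool)).sum_comp, Fintype.sum_prod_type_right]
  refine Finset.sum_congr rfl fun t _ => ?_
  rw [Fintype.sum_bool, add_comm]
  rfl

noncomputable def Ac (n : ℕ) (σ a b : Fin n → Bool) : ℝ :=
  ∑ t, if xN n t ≤ xN n a ∧ yN n (bx t σ) < yN n b then 1 else 0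

noncomputable def Ec (n : ℕ) (σ a b : Fin n → Bool) : ℝ :=
  if xN n (bx b σ) ≤ xN n a then 1 else 0

lemma bx_iff (n : ℕ) (σ t b : Fin n → Bool) : yN n (bx t σ) = yN n b ↔ t = bx b σ := by
  constructor
  · intro h
    have := yN_inj n _ _ h
    subst this
    funext i
    simp only [bx]
    cases t i <;> cases σ i <;> rfl
  · rintro rfl
    congr 1
    funext i
    simp only [bx]
    cases b i <;> cases σ i <;> rfl

lemma sum_eq_one (n : ℕ) (σ b : Fin n → Bool) (f : (Fin n → Bool) → ℝ) :
    ∑ t, (if yN n (bx t σ) = yN n b then f t else 0) = f (bx b σ) := by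
  simp_rw [bx_iff]
  simp

lemma bx_snoc (n : ℕ) (t : Fin n → Bool) (u : Bool) (σ : Fin (n+1) → Bool) :
    bx (Fin.snoc t u) σ = Fin.snoc (bx t (Fin.init σ)) (u != σ (Fin.last n)) := by
  funext i
  refine Fin.lastCases ?_ (fun i => ?_) i
  · simp [bx]
  · simp [bx, Fin.init]

lemma sum_lt (n : ℕ) (σ b : Fin n → Bool) :
    ∑ t, (if yN n (bx t σ) < yN n b then (1:ℝ) else 0) = yN n b := by
  induction n with
  | zero => simp [yN]
  | succ n ih =>
    rw [sum_snoc]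
    simp only [bx_snoc, yN, Fin.init_snoc, Fin.snoc_last]
    have key : ∀ t : Fin n → Bool,
      ((if 2 * yN n (bx t (Fin.init σ)) + (false != σ (Fin.last n)).toNat
          < 2 * yN n (Fin.init b) + (b (Fin.last n)).toNat then (1:ℝ) else 0)
       + (if 2 * yN n (bx t (Fin.init σ)) + (true != σ (Fin.last n)).toNat
          < 2 * yN n (Fin.init b) + (b (Fin.last n)).toNat then (1:ℝ) else 0))
      = 2 * (if yN n (bx t (Fin.init σ)) < yN n (Fin.init b) then (1:ℝ) else 0)
        + (if yN n (bx t (Fin.init σ)) = yN n (Fin.init b) then ((b (Fin.last n)).toNat : ℝ) else 0) := by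
      intro t
      generalize yN n (bx t (Fin.init σ)) = l
      generalize yN n (Fin.init b) = j
      generalize b (Fin.last n) = c
      generalize σ (Fin.last n) = s
      rcases lt_trichotomy l j with h | h | h
      · have h1 : l ≠ j := h.ne
        rw [if_pos, if_pos, if_pos h, if_neg h1]
        · norm_num
        · cases s <;> cases c <;> simp <;> omega
        · cases s <;> cases c <;> simp <;> omega
      · subst h
        cases s <;> cases c <;> simp
      · have h1 : l ≠ j := h.ne'
        rw [if_neg, if_neg, if_neg h.not_gt, if_neg h1]
        · norm_num
        · cases s <;> cases c <;> simp <;> omega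
        · cases s <;> cases c <;> simp <;> omega
    rw [Finset.sum_congr rfl (fun t _ => key t), Finset.sum_add_distrib, ← Finset.mul_sum, ih,
      sum_eq_one n (Fin.init σ) (Fin.init b) (fun _ => ((b (Fin.last n)).toNat : ℝ))]
    push_cast; ring

noncomputable def Ev (s u : Bool) (e : ℝ) : ℝ :=
  if s then (if u then e else 0) else (if u then 1 else e)

lemma Ec_snoc (n : ℕ) (σ : Fin (n+1) → Bool) (a b : Fin n → Bool) (u v : Bool) :
    Ec (n+1) σ (Fin.snoc a u) (Fin.snoc b v)
      = Ev (v != σ (Fin.last n)) u (Ec n (Fin.init σ) a b) := by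
  unfold Ec Ev
  simp only [bx_snoc, xN, Fin.init_snoc, Fin.snoc_last]
  have h1 := xN_lt n a
  have h2 := xN_lt n (bx b (Fin.init σ))
  generalize xN n (bx b (Fin.init σ)) = m at *
  generalize xN n a = i at *
  generalize (v != σ (Fin.last n)) = s
  cases s <;> cases u <;> simp <;> omega

lemma Ac_snoc (n : ℕ) (σ : Fin (n+1) → Bool) (a b : Fin n → Bool) (u v : Bool) :
    Ac (n+1) σ (Fin.snoc a u) (Fin.snoc b v)
      = Ac n (Fin.init σ) a b + bval u * yN n b
        + bval v * Ev (σ (Fin.last n)) u (Ec n (Fin.init σ) a b) := by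
  unfold Ac
  rw [sum_snoc]
  simp only [bx_snoc, xN, yN, Fin.init_snoc, Fin.snoc_last]
  have key : ∀ t : Fin n → Bool,
    ((if xN n t + false.toNat * 2^n ≤ xN n a + u.toNat * 2^n ∧
        2 * yN n (bx t (Fin.init σ)) + (false != σ (Fin.last n)).toNat
          < 2 * yN n b + v.toNat then (1:ℝ) else 0)
     + (if xN n t + true.toNat * 2^n ≤ xN n a + u.toNat * 2^n ∧
        2 * yN n (bx t (Fin.init σ)) + (true != σ (Fin.last n)).toNat
          < 2 * yN n b + v.toNat then (1:ℝ) else 0))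
    = (if xN n t ≤ xN n a ∧ yN n (bx t (Fin.init σ)) < yN n b then (1:ℝ) else 0)
      + bval u * (if yN n (bx t (Fin.init σ)) < yN n b then (1:ℝ) else 0)
      + (if yN n (bx t (Fin.init σ)) = yN n b then
          bval v * Ev (σ (Fin.last n)) u (if xN n t ≤ xN n a then 1 else 0) else 0) := by
    intro t
    have h1 := xN_lt n a
    have h2 := xN_lt n t
    generalize yN n (bx t (Fin.init σ)) = l
    generalize yN n b = j
    generalize xN n t = m at *
    generalize xN n a = i at *
    generalize σ (Fin.last n) = s
    have f1 : ¬ (m + 2^n ≤ i) := by omega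
    have f2 : m ≤ i + 2^n := by omega
    rcases lt_trichotomy l j with h | h | h
    · have h1 : l ≠ j := h.ne
      have g1 : 2 * l + 1 < 2 * j := by omega
      have g2 : 2 * l + 1 < 2 * j + 1 := by omega
      have g3 : 2 * l < 2 * j + 1 := by omega
      cases s <;> cases u <;> cases v <;> simp [bval, Ev, h, h1, f1, f2, g1, g2, g3] <;> ring
    · subst h
      cases s <;> cases u <;> cases v <;> simp [bval, Ev, f1, f2]
    · have h1 : l ≠ j := h.ne'
      have g0 : ¬ l < j := h.not_gt
      have g1 : ¬ 2 * l + 1 < 2 * j := by omega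
      have g2 : ¬ 2 * l + 1 < 2 * j + 1 := by omega
      have g3 : ¬ 2 * l < 2 * j + 1 := by omega
      cases s <;> cases u <;> cases v <;> simp [bval, Ev, g0, h1, f1, f2, g1, g2, g3]
  rw [Finset.sum_congr rfl (fun t _ => key t), Finset.sum_add_distrib, Finset.sum_add_distrib,
    ← Finset.mul_sum, sum_lt,
    sum_eq_one n (Fin.init σ) b (fun t => bval v * Ev (σ (Fin.last n)) u (if xN n t ≤ xN n a then 1 else 0))]
  rfl

noncomputable def drift : (n : ℕ) → (Fin n → Bool) → ℝ
  | 0, _ => 0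
  | n+1, σ => drift n (Fin.init σ) + (if σ (Fin.last n) then -1/8 else 1/8)

lemma drift_not (n : ℕ) (σ : Fin n → Bool) : drift n (fun i => !(σ i)) = - drift n σ := by
  induction n with
  | zero => simp [drift]
  | succ n ih =>
    have e2 : Fin.init (fun i => !(σ i)) = (fun i => !(Fin.init σ i)) := rfl
    simp only [drift, e2]
    rw [ih]
    rcases Bool.eq_false_or_eq_true (σ (Fin.last n)) with h | h <;> simp [h] <;> ring

noncomputable def Phi (n : ℕ) (σ a b : Fin n → Bool) : ℝ :=
  Ac n σ a b - (xN n a : ℝ) * yN n b / 2^n + (Ec n σ a b - (xN n a : ℝ) / 2^n) / 2 - drift n σ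

noncomputable def dd (s u v : Bool) (e w : ℝ) : ℝ :=
  bval v * (Ev s u e - bval u / 2 - w / 2)
    + ((Ev (v != s) u e - (bval u + w) / 2) - (e - w)) / 2 - (if s then -1/8 else 1/8)

lemma Phi_snoc (n : ℕ) (σ : Fin (n+1) → Bool) (a b : Fin n → Bool) (u v : Bool) :
    Phi (n+1) σ (Fin.snoc a u) (Fin.snoc b v)
      = Phi n (Fin.init σ) a b
        + dd (σ (Fin.last n)) u v (Ec n (Fin.init σ) a b) ((xN n a : ℝ) / 2^n) := by
  unfold Phi dd
  rw [Ac_snoc, Ec_snoc]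
  simp only [drift, xN, yN, Fin.init_snoc, Fin.snoc_last]
  have h3 : (2:ℝ)^n ≠ 0 := by positivity
  have hu : ∀ u : Bool, ((u.toNat : ℕ) : ℝ) = bval u := by intro u; cases u <;> simp [bval]
  push_cast
  rw [hu, hu]
  field_simp
  ring

lemma dd_sum (s : Bool) (e w : ℝ) :
    dd s false false e w + dd s true false e w + dd s false true e w + dd s true true e w = 0 := by
  cases s <;> simp [dd, Ev, bval] <;> ring

lemma dd_bound (s u v : Bool) (e w : ℝ) (he : 0 ≤ e) (he1 : e ≤ 1) (hw : 0 ≤ w) (hw1 : w ≤ 1) :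
    |dd s u v e w| ≤ 3 := by
  rw [abs_le]
  cases s <;> cases u <;> cases v <;> simp [dd, Ev, bval] <;> constructor <;> linarith

lemma exp_step (s : Bool) (e w l : ℝ) (he : 0 ≤ e) (he1 : e ≤ 1) (hw : 0 ≤ w) (hw1 : w ≤ 1)
    (hl : |l| ≤ 1/3) :
    Real.exp (l * dd s false false e w) + Real.exp (l * dd s true false e w)
     + Real.exp (l * dd s false true e w) + Real.exp (l * dd s true true e w)
     ≤ 4 * (1 + 9 * l^2) := by
  have key : ∀ u v, Real.exp (l * dd s u v e w) ≤ 1 + l * dd s u v e w + 9 * l^2 := by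
    intro u v
    have hb := dd_bound s u v e w he he1 hw hw1
    have h1 : |l * dd s u v e w| ≤ 1 := by
      rw [abs_mul]
      nlinarith [abs_nonneg l, abs_nonneg (dd s u v e w)]
    have h2 := (abs_le.1 (Real.abs_exp_sub_one_sub_id_le h1)).2
    have h3 : (l * dd s u v e w)^2 ≤ 9 * l^2 := by
      rw [mul_pow]
      have : (dd s u v e w)^2 ≤ 9 := by
        rw [← sq_abs]; nlinarith [abs_nonneg (dd s u v e w)]
      nlinarith [sq_nonneg l]
    linarith
  have h0 : l * (dd s false false e w + dd s true false e w + dd s false true e w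
    + dd s true true e w) = 0 := by rw [dd_sum]; ring
  linarith [key false false, key true false, key false true, key true true]

lemma Ec_mem (n : ℕ) (σ a b : Fin n → Bool) : 0 ≤ Ec n σ a b ∧ Ec n σ a b ≤ 1 := by
  unfold Ec; split_ifs <;> norm_num

lemma w_mem (n : ℕ) (a : Fin n → Bool) : 0 ≤ (xN n a : ℝ) / 2^n ∧ (xN n a : ℝ) / 2^n ≤ 1 := by
  refine ⟨by positivity, ?_⟩
  rw [div_le_one (by positivity)]
  exact_mod_cast (xN_lt n a).le

lemma exp_sum (n : ℕ) (σ : Fin n → Bool) (l : ℝ) (hl : |l| ≤ 1/3) :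
    ∑ a, ∑ b, Real.exp (l * Phi n σ a b) ≤ 2 * (4 * (1 + 9 * l^2))^n := by
  induction n with
  | zero =>
    simp [Phi, Ac, Ec, xN, yN, drift]
    have h0 := abs_le.1 hl
    have h1 : |l * 2⁻¹| ≤ 1 := abs_le.2 ⟨by linarith, by linarith⟩
    have h2 := (abs_le.1 (Real.abs_exp_sub_one_sub_id_le h1)).2
    nlinarith
  | succ n ih =>
    rw [sum_snoc]
    simp_rw [sum_snoc]
    rw [pow_succ, ← mul_assoc]
    refine le_trans ?_ (mul_le_mul_of_nonneg_right (ih (Fin.init σ)) (by positivity))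
    rw [Finset.sum_mul]
    refine Finset.sum_le_sum fun a _ => ?_
    rw [Finset.sum_mul, ← Finset.sum_add_distrib]
    refine Finset.sum_le_sum fun b _ => ?_
    simp only [Phi_snoc, mul_add, Real.exp_add]
    have h := exp_step (σ (Fin.last n)) (Ec n (Fin.init σ) a b) ((xN n a : ℝ)/2^n) l
      (Ec_mem _ _ _ _).1 (Ec_mem _ _ _ _).2 (w_mem _ _).1 (w_mem _ _).2 hl
    have h2 := mul_le_mul_of_nonneg_left h (Real.exp_pos (l * Phi n (Fin.init σ) a b)).le
    linarith

lemma cell_x (n i m : ℕ) (t : ℝ) (h1 : (i:ℝ) < 2^n * t) (h2 : 2^n * t ≤ i + 1) :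
    (m : ℝ) / 2^n < t ↔ m ≤ i := by
  rw [div_lt_iff₀ (by positivity)]
  constructor
  · intro h
    have : (m:ℝ) < (i:ℝ) + 1 := by linarith
    have : m < i + 1 := by exact_mod_cast this
    omega
  · intro h
    have : (m:ℝ) ≤ i := by exact_mod_cast h
    linarith

lemma count_eq (n : ℕ) (σ a b : Fin n → Bool) (t : ℝ × ℝ)
    (h1 : (xN n a : ℝ) < 2^n * t.1) (h2 : 2^n * t.1 ≤ xN n a + 1)
    (h3 : (yN n b : ℝ) < 2^n * t.2) (h4 : 2^n * t.2 ≤ yN n b + 1) :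
    (countIn (hammersleySymTilde n σ) t : ℝ)
      = Ac n σ a b + Ec n σ a b + Ac n (fun i => !(σ i)) a b := by
  classical
  unfold countIn
  rw [Finset.card_filter, Nat.cast_sum, Fintype.sum_prod_type, Fintype.sum_bool]
  have hT : ∀ s : Fin n → Bool, (((if 0 ≤ (hammersleySymTilde n σ (true, s)).1 ∧
      (hammersleySymTilde n σ (true, s)).1 < t.1 ∧ 0 ≤ (hammersleySymTilde n σ (true, s)).2 ∧
      (hammersleySymTilde n σ (true, s)).2 < t.2 then 1 else 0 : ℕ)) : ℝ)
      = if xN n s ≤ xN n a ∧ yN n (bx s (fun i => !(σ i))) < yN n b then 1 else 0 := by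
    intro s
    simp only [hammersleySymTilde, if_true, hs_eq, cell_x n _ _ _ h1 h2, Nat.cast_ite, Nat.cast_one,
      Nat.cast_zero]
    have hn : (yN n (bx s σ) : ℝ) + yN n (bx s (fun i => !(σ i))) + 1 = 2^n := by
      exact_mod_cast yN_not n σ s
    have e : 1 - (yN n (bx s σ) : ℝ) / 2^n = ((yN n (bx s (fun i => !(σ i))) + 1 : ℕ) : ℝ) / 2^n := by
      have h3 : (2:ℝ)^n ≠ 0 := by positivity
      push_cast
      field_simp
      linarith
    have p1 : (0:ℝ) ≤ (xN n s : ℝ) / 2^n := by positivity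
    have p2 : (0:ℝ) ≤ ((yN n (bx s (fun i => !(σ i))) + 1 : ℕ) : ℝ) / 2^n := by positivity
    simp only [e, cell_x n _ _ _ h3 h4, p1, p2, true_and, Nat.add_one_le_iff]
  have hF : ∀ s : Fin n → Bool, (((if 0 ≤ (hammersleySymTilde n σ (false, s)).1 ∧
      (hammersleySymTilde n σ (false, s)).1 < t.1 ∧ 0 ≤ (hammersleySymTilde n σ (false, s)).2 ∧
      (hammersleySymTilde n σ (false, s)).2 < t.2 then 1 else 0 : ℕ)) : ℝ)
      = (if xN n s ≤ xN n a ∧ yN n (bx s σ) < yN n b then 1 else 0)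
        + (if yN n (bx s σ) = yN n b then (if xN n s ≤ xN n a then 1 else 0) else 0) := by
    intro s
    have p1 : (0:ℝ) ≤ (xN n s : ℝ) / 2^n := by positivity
    have p2 : (0:ℝ) ≤ (yN n (bx s σ) : ℝ) / 2^n := by positivity
    simp only [hammersleySymTilde, Bool.false_eq_true, if_false, hs_eq, cell_x n _ _ _ h1 h2,
      cell_x n _ _ _ h3 h4, p1, p2, true_and, Nat.cast_ite, Nat.cast_one, Nat.cast_zero]
    rcases lt_trichotomy (yN n (bx s σ)) (yN n b) with h | h | h
    · simp [h, h.le, h.ne]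
    · simp [h]
    · simp [h.not_ge, h.not_gt, h.ne']
  rw [Finset.sum_congr rfl (fun s _ => hT s),
    Finset.sum_congr rfl (fun s _ => hF s), Finset.sum_add_distrib, sum_eq_one n σ b]
  unfold Ac Ec
  ring

lemma cell_bound (n : ℕ) (σ a b : Fin n → Bool) (t : ℝ × ℝ)
    (h1 : (xN n a : ℝ) < 2^n * t.1) (h2 : 2^n * t.1 ≤ xN n a + 1)
    (h3 : (yN n b : ℝ) < 2^n * t.2) (h4 : 2^n * t.2 ≤ yN n b + 1) :
    2^(n+1) * |localDisc (hammersleySymTilde n σ) t|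
      ≤ |Phi n σ a b| + |Phi n (fun i => !(σ i)) a b| + 5 := by
  have hP : (0:ℝ) < 2^n := by positivity
  have hc : localDisc (hammersleySymTilde n σ) t * 2^(n+1) =
      Ac n σ a b + Ec n σ a b + Ac n (fun i => !(σ i)) a b
        - 2 * ((2^n * t.1) * (2^n * t.2) / 2^n) := by
    unfold localDisc
    rw [count_eq n σ a b t h1 h2 h3 h4]
    simp only [Fintype.card_prod, Fintype.card_bool, Fintype.card_fun, Fintype.card_fin]
    push_cast
    field_simp
    ring
  have hi : (xN n a : ℝ) + 1 ≤ 2^n := by exact_mod_cast xN_lt n a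
  have hj : (yN n b : ℝ) + 1 ≤ 2^n := by exact_mod_cast yN_lt n b
  have hi0 : (0:ℝ) ≤ xN n a := by positivity
  have hj0 : (0:ℝ) ≤ yN n b := by positivity
  have hlo : (xN n a : ℝ) * yN n b / 2^n ≤ (2^n * t.1) * (2^n * t.2) / 2^n := by
    gcongr
    linarith
  have hhi : (2^n * t.1) * (2^n * t.2) / 2^n ≤ (xN n a : ℝ) * yN n b / 2^n + 2 := by
    rw [div_add' _ _ _ hP.ne']
    gcongr
    have : (2^n * t.1) * (2^n * t.2) ≤ ((xN n a : ℝ) + 1) * (yN n b + 1) := by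
      apply mul_le_mul h2 h4 (by linarith) (by linarith)
    nlinarith
  have e1 := Ec_mem n σ a b
  have e2 := Ec_mem n (fun i => !(σ i)) a b
  have w := w_mem n a
  have d := drift_not n σ
  have hs : Phi n σ a b + Phi n (fun i => !(σ i)) a b
      = Ac n σ a b + Ac n (fun i => !(σ i)) a b - 2 * ((xN n a : ℝ) * yN n b / 2^n)
       + (Ec n σ a b - (xN n a : ℝ) / 2^n) / 2
       + (Ec n (fun i => !(σ i)) a b - (xN n a : ℝ) / 2^n) / 2 := by
    unfold Phi; rw [d]; ring
  have : 2^(n+1) * |localDisc (hammersleySymTilde n σ) t|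
     = |localDisc (hammersleySymTilde n σ) t * 2^(n+1)| := by
    rw [abs_mul, abs_of_pos (by positivity : (0:ℝ) < 2^(n+1)), mul_comm]
  rw [this, hc]
  have q1 := abs_le.1 (le_refl |Phi n σ a b|)
  have q2 := abs_le.1 (le_refl |Phi n (fun i => !(σ i)) a b|)
  rw [abs_le]
  constructor <;> linarith

lemma rpow_le_exp (p u : ℝ) (hp : 1 < p) (hu : 0 ≤ u) : u ^ p ≤ p ^ p * Real.exp u := by
  have hp0 : 0 < p := by linarith
  have h1 : u / p ≤ Real.exp (u / p) := by linarith [Real.add_one_le_exp (u / p)]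
  have h2 := Real.rpow_le_rpow (by positivity) h1 hp0.le
  rw [Real.div_rpow hu hp0.le, ← Real.exp_mul, div_mul_cancel₀ _ hp0.ne',
    div_le_iff₀ (by positivity)] at h2
  linarith

noncomputable def gg (n : ℕ) (l : ℝ) (σ a b : Fin n → Bool) : ℝ :=
  Real.exp (l * Phi n σ a b) + Real.exp (-l * Phi n σ a b)

lemma exp_abs (l x : ℝ) (hl : 0 ≤ l) : Real.exp (l * |x|) ≤ Real.exp (l * x) + Real.exp (-l * x) := by
  rcases abs_cases x with ⟨h, _⟩ | ⟨h, _⟩ <;> rw [h]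
  · linarith [Real.exp_pos (-l * x)]
  · have : l * -x = -l * x := by ring
    rw [this]
    linarith [Real.exp_pos (l * x)]

lemma cell_bound2 (p : ℝ) (hp : 1 < p) (n : ℕ) (σ a b : Fin n → Bool) (t : ℝ × ℝ)
    (l : ℝ) (hl : 0 < l) (hl1 : l ≤ 1/3)
    (h1 : (xN n a : ℝ) < 2^n * t.1) (h2 : 2^n * t.1 ≤ xN n a + 1)
    (h3 : (yN n b : ℝ) < 2^n * t.2) (h4 : 2^n * t.2 ≤ yN n b + 1) :
    |localDisc (hammersleySymTilde n σ) t| ^ p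
      ≤ (2 * p / (l * 2^(n+1)))^p * (3 * (gg n l σ a b + gg n l (fun i => !(σ i)) a b)) := by
  have h := cell_bound n σ a b t h1 h2 h3 h4
  set D := |localDisc (hammersleySymTilde n σ) t| with hD
  have hD0 : 0 ≤ D := abs_nonneg _
  set A := |Phi n σ a b| with hA
  set B := |Phi n (fun i => !(σ i)) a b| with hB
  have hp0 : 0 < p := by linarith
  set u := l * (2^(n+1) * D) / 2 with hu
  have hu0 : 0 ≤ u := by positivity
  have hDu : D = (2 / (l * 2^(n+1))) * u := by
    rw [hu]; field_simp
  have hule : u ≤ l * A / 2 + l * B / 2 + 5/6 := by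
    have := mul_le_mul_of_nonneg_left h hl.le
    rw [hu]; nlinarith
  have hexp : Real.exp u ≤ 3 * (Real.exp (l * A) + Real.exp (l * B)) := by
    have e0 : Real.exp (l * A / 2 + l * B / 2 + 5/6)
        = Real.exp (l * A / 2) * Real.exp (l * B / 2) * Real.exp (5/6) := by
      rw [Real.exp_add, Real.exp_add]
    have e1 : Real.exp (l * A) = Real.exp (l * A / 2) ^ 2 := by
      rw [← Real.exp_nat_mul]; congr 1; push_cast; ring
    have e2 : Real.exp (l * B) = Real.exp (l * B / 2) ^ 2 := by
      rw [← Real.exp_nat_mul]; congr 1; push_cast; ring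
    have e3 : Real.exp (5/6) ≤ 3 := by
      have : Real.exp (5/6) ≤ Real.exp 1 := Real.exp_le_exp.2 (by norm_num)
      linarith [Real.exp_one_lt_d9]
    refine (Real.exp_le_exp.2 hule).trans ?_
    rw [e0, e1, e2]
    have := Real.exp_pos (l * A / 2)
    have := Real.exp_pos (l * B / 2)
    set P := Real.exp (l * A / 2)
    set Q := Real.exp (l * B / 2)
    have h5 : P * Q * Real.exp (5/6) ≤ P * Q * 3 := by gcongr
    nlinarith [sq_nonneg (P - Q)]
  have hgA := exp_abs l (Phi n σ a b) hl.le
  have hgB := exp_abs l (Phi n (fun i => !(σ i)) a b) hl.le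
  have e : (2 * p / (l * 2^(n+1)))^p = (2 / (l * 2^(n+1)))^p * p^p := by
    rw [← Real.mul_rpow (by positivity) hp0.le]; congr 1; ring
  rw [hDu, Real.mul_rpow (by positivity) hu0, e, mul_assoc]
  gcongr
  refine (rpow_le_exp p u hp hu0).trans ?_
  gcongr
  refine hexp.trans ?_
  unfold gg
  linarith

def cell (n : ℕ) (a b : Fin n → Bool) : Set (ℝ × ℝ) :=
  Set.Ioc ((xN n a : ℝ) / 2^n) ((xN n a + 1 : ℝ) / 2^n) ×ˢ
    Set.Ioc ((yN n b : ℝ) / 2^n) ((yN n b + 1 : ℝ) / 2^n)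

lemma cell_meas (n : ℕ) (a b : Fin n → Bool) : MeasurableSet (cell n a b) :=
  measurableSet_Ioc.prod measurableSet_Ioc

lemma cell_vol (n : ℕ) (a b : Fin n → Bool) :
    volume (cell n a b) = ENNReal.ofReal ((1/4)^n) := by
  unfold cell
  rw [Measure.volume_eq_prod, Measure.prod_prod, Real.volume_Ioc, Real.volume_Ioc,
    ← ENNReal.ofReal_mul]
  · congr 1
    have : (4:ℝ)^n = 2^n * 2^n := by rw [← mul_pow]; norm_num
    rw [one_div, inv_pow, this]
    field_simp
    ring
  · rw [← sub_div]; apply div_nonneg _ (by positivity); linarith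

lemma exists_idx (n : ℕ) (t : ℝ) (h0 : 0 < t) (h1 : t ≤ 1) :
    ∃ k : ℕ, k < 2^n ∧ (k:ℝ) < 2^n * t ∧ 2^n * t ≤ k + 1 := by
  have hP : (0:ℝ) < 2^n := by positivity
  have hpos : 0 < ⌈2^n * t⌉₊ := Nat.ceil_pos.2 (by positivity)
  have hle : ⌈2^n * t⌉₊ ≤ 2^n := Nat.ceil_le.2 (by push_cast; nlinarith)
  have hlt := Nat.ceil_lt_add_one (a := 2^n * t) (by positivity)
  have hge := Nat.le_ceil (2^n * t)
  refine ⟨⌈2^n * t⌉₊ - 1, by omega, ?_, ?_⟩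
  · rw [Nat.cast_sub (by omega)]; push_cast; linarith
  · rw [Nat.cast_sub (by omega)]; push_cast; linarith

lemma integral_bound (p : ℝ) (hp : 1 < p) (n : ℕ) (σ : Fin n → Bool)
    (l : ℝ) (hl : 0 < l) (hl1 : l ≤ 1/3) :
    ∫ t in Set.Icc (0 : ℝ × ℝ) 1, |localDisc (hammersleySymTilde n σ) t| ^ p
      ≤ (2 * p / (l * 2^(n+1)))^p * (24 * (1 + 9 * l^2)^n) := by
  set K := (2 * p / (l * 2^(n+1)))^p with hK
  have hp0 : 0 < p := by linarith
  have hK0 : 0 ≤ K := by positivity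
  set w : (Fin n → Bool) → (Fin n → Bool) → ℝ := fun a b =>
    K * (3 * (gg n l σ a b + gg n l (fun i => !(σ i)) a b)) with hw
  have hw0 : ∀ a b, 0 ≤ w a b := by intro a b; simp only [hw, gg]; positivity
  have hint : ∀ a b, Integrable ((cell n a b).indicator (fun _ => w a b))
      (volume.restrict (Set.Icc (0 : ℝ × ℝ) 1)) := by
    intro a b
    apply Integrable.indicator _ (cell_meas n a b)
    apply integrable_const_iff.2
    right
    refine ⟨?_⟩
    rw [Measure.restrict_apply_univ]
    exact isCompact_Icc.measure_lt_top
  have step : ∫ t in Set.Icc (0 : ℝ × ℝ) 1, |localDisc (hammersleySymTilde n σ) t| ^ p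
      ≤ ∫ t in Set.Icc (0 : ℝ × ℝ) 1, ∑ a, ∑ b, (cell n a b).indicator (fun _ => w a b) t := by
    apply integral_mono_of_nonneg
    · exact Filter.Eventually.of_forall fun t => by positivity
    · exact integrable_finsetSum _ fun a _ => integrable_finsetSum _ fun b _ => hint a b
    · filter_upwards [ae_restrict_mem measurableSet_Icc] with t ht
      have hn0 : ∀ a b, 0 ≤ (cell n a b).indicator (fun _ => w a b) t := fun a b =>
        Set.indicator_nonneg (fun _ _ => hw0 a b) t
      have hz : localDisc (hammersleySymTilde n σ) t = 0 → |localDisc (hammersleySymTilde n σ) t| ^ p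
          ≤ ∑ a, ∑ b, (cell n a b).indicator (fun _ => w a b) t := by
        intro h
        rw [h, abs_zero, Real.zero_rpow hp0.ne']
        exact Finset.sum_nonneg fun a _ => Finset.sum_nonneg fun b _ => hn0 a b
      obtain ⟨⟨ht1, ht2⟩, ht3, ht4⟩ := ht
      simp only [Prod.fst_zero, Prod.snd_zero, Prod.fst_one, Prod.snd_one] at ht1 ht2 ht3 ht4
      by_cases g1 : t.1 = 0
      · apply hz
        unfold localDisc countIn
        rw [Finset.filter_false_of_mem]
        · simp [g1]
        · rintro k - ⟨q1, q2, -⟩; linarith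
      by_cases g2 : t.2 = 0
      · apply hz
        unfold localDisc countIn
        rw [Finset.filter_false_of_mem]
        · simp [g2]
        · rintro k - ⟨-, -, q1, q2⟩; linarith
      obtain ⟨i, hi, hi1, hi2⟩ := exists_idx n t.1 (lt_of_le_of_ne ht1 (Ne.symm g1)) ht3
      obtain ⟨j, hj, hj1, hj2⟩ := exists_idx n t.2 (lt_of_le_of_ne ht2 (Ne.symm g2)) ht4
      obtain ⟨a, rfl⟩ := xN_surj n i hi
      obtain ⟨b, rfl⟩ := yN_surj n j hj
      have hm : t ∈ cell n a b := by
        have hP : (0:ℝ) < 2^n := by positivity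
        refine ⟨⟨?_, ?_⟩, ⟨?_, ?_⟩⟩
        · rw [div_lt_iff₀ hP]; linarith
        · rw [le_div_iff₀ hP]; linarith
        · rw [div_lt_iff₀ hP]; linarith
        · rw [le_div_iff₀ hP]; linarith
      have h := cell_bound2 p hp n σ a b t l hl hl1 hi1 hi2 hj1 hj2
      calc _ ≤ w a b := h
        _ = (cell n a b).indicator (fun _ => w a b) t := by rw [Set.indicator_of_mem hm]
        _ ≤ ∑ b, (cell n a b).indicator (fun _ => w a b) t :=
          Finset.single_le_sum (f := fun b => (cell n a b).indicator (fun _ => w a b) t)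
            (fun b _ => hn0 a b) (Finset.mem_univ b)
        _ ≤ _ := Finset.single_le_sum
            (f := fun a => ∑ b, (cell n a b).indicator (fun _ => w a b) t)
            (fun a _ => Finset.sum_nonneg fun b _ => hn0 a b) (Finset.mem_univ a)
  refine step.trans ?_
  rw [integral_finsetSum _ fun a _ => integrable_finsetSum _ fun b _ => hint a b]
  have hI : ∀ a b, ∫ t in Set.Icc (0 : ℝ × ℝ) 1, (cell n a b).indicator (fun _ => w a b) t
      ≤ (1/4)^n * w a b := by
    intro a b
    rw [integral_indicator (cell_meas n a b), setIntegral_const, smul_eq_mul]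
    apply mul_le_mul_of_nonneg_right _ (hw0 a b)
    unfold Measure.real
    apply ENNReal.toReal_le_of_le_ofReal (by positivity)
    rw [← cell_vol n a b]
    exact Measure.restrict_apply_le _ _
  have hsum : ∀ τ : Fin n → Bool, ∑ a, ∑ b, gg n l τ a b ≤ 4 * (4 * (1 + 9 * l^2))^n := by
    intro τ
    unfold gg
    simp_rw [Finset.sum_add_distrib]
    have q1 := exp_sum n τ l (by rw [abs_of_pos hl]; exact hl1)
    have q2 := exp_sum n τ (-l) (by rw [abs_neg, abs_of_pos hl]; exact hl1)
    rw [neg_sq] at q2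
    linarith
  calc _ ≤ ∑ a, ∑ b, (1/4)^n * w a b := by
        refine Finset.sum_le_sum fun a _ => ?_
        rw [integral_finsetSum _ fun b _ => hint a b]
        exact Finset.sum_le_sum fun b _ => hI a b
    _ = (1/4)^n * (K * (3 * (∑ a, ∑ b, gg n l σ a b + ∑ a, ∑ b, gg n l (fun i => !(σ i)) a b))) := by
        simp only [hw, Finset.mul_sum, ← Finset.sum_add_distrib]
    _ ≤ (1/4)^n * (K * (3 * (4 * (4 * (1 + 9 * l^2))^n + 4 * (4 * (1 + 9 * l^2))^n))) := by
        gcongr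
        · exact hsum _
        · exact hsum _
    _ = _ := by
        have : (1/4:ℝ)^n * 4^n = 1 := by rw [← mul_pow]; norm_num
        rw [mul_pow]
        linear_combination (K * 24 * (1 + 9 * l^2)^n) * this

/-- The multiset `~R_{n,σ}^{sym}` (with `N = 2^(n+1)` points counted with multiplicity)
has optimal `L_p`-discrepancy `≪ √(log N)/N`, independently of the shift `σ`. -/
theorem statement3 (p : ℝ) (hp : 1 < p) :
    ∃ C : ℝ, 0 < C ∧ ∀ n : ℕ, 0 < n → ∀ σ : Fin n → Bool,
      LpDisc p (hammersleySymTilde n σ) ≤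
        C * Real.sqrt (Real.log ((2 : ℝ) ^ (n + 1))) / 2 ^ (n + 1) := by
  have hp0 : 0 < p := by linarith
  refine ⟨6 * p * 72 * 2, by positivity, fun n hn σ => ?_⟩
  have hn' : (1:ℝ) ≤ n := by exact_mod_cast hn
  have hs : 1 ≤ Real.sqrt n := Real.one_le_sqrt.2 hn'
  have hs0 : 0 < Real.sqrt n := by linarith
  have hsq : Real.sqrt n ^ 2 = n := Real.sq_sqrt (by linarith)
  set l : ℝ := 1 / (3 * Real.sqrt n) with hl
  have hl0 : 0 < l := by positivity
  have hl1 : l ≤ 1/3 := by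
    rw [hl]; apply one_div_le_one_div_of_le (by norm_num); linarith
  have h := integral_bound p hp n σ l hl0 hl1
  have h9 : 9 * l^2 = 1 / n := by
    rw [hl, div_pow, mul_pow, hsq]; field_simp; norm_num
  have hpow : (1 + 9 * l^2)^n ≤ 3 := by
    rw [h9]
    have h1 : (1 + 1 / (n:ℝ)) ≤ Real.exp (1 / n) := by linarith [Real.add_one_le_exp (1 / (n:ℝ))]
    have h2 : (1 + 1 / (n:ℝ))^n ≤ Real.exp (1 / n) ^ n := by gcongr
    rw [← Real.exp_nat_mul, mul_one_div_cancel (by positivity)] at h2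
    linarith [Real.exp_one_lt_d9]
  have h2 : ∫ t in Set.Icc (0 : ℝ × ℝ) 1, |localDisc (hammersleySymTilde n σ) t| ^ p
      ≤ (2 * p / (l * 2^(n+1)))^p * 72 := by
    refine h.trans ?_
    gcongr
    linarith
  have h3 : LpDisc p (hammersleySymTilde n σ) ≤ (2 * p / (l * 2^(n+1))) * 72 := by
    unfold LpDisc
    refine (Real.rpow_le_rpow (integral_nonneg fun t => by positivity) h2 (by positivity)).trans ?_
    rw [Real.mul_rpow (by positivity) (by norm_num), ← Real.rpow_mul (by positivity),
      mul_one_div_cancel hp0.ne', Real.rpow_one]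
    gcongr
    calc (72:ℝ) ^ (1/p) ≤ 72 ^ (1:ℝ) := by
          apply Real.rpow_le_rpow_of_exponent_le (by norm_num)
          rw [div_le_one hp0]; exact hp.le
      _ = 72 := Real.rpow_one _
  refine h3.trans ?_
  have h4 : Real.sqrt n ≤ 2 * Real.sqrt (Real.log (2 ^ (n+1))) := by
    have e : (2:ℝ) * Real.sqrt (Real.log (2 ^ (n+1))) = Real.sqrt (4 * Real.log (2^(n+1))) := by
      rw [Real.sqrt_mul (by norm_num), show (4:ℝ) = 2^2 by norm_num, Real.sqrt_sq (by norm_num)]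
    rw [e]
    apply Real.sqrt_le_sqrt
    rw [Real.log_pow]
    push_cast
    nlinarith [Real.log_two_gt_d9]
  have h5 : 2 * p / (l * 2^(n+1)) * 72 = 6 * p * 72 * Real.sqrt n / 2^(n+1) := by
    rw [hl]; field_simp; norm_num
  rw [h5]
  gcongr ?_ / _
  calc 6 * p * 72 * Real.sqrt n ≤ 6 * p * 72 * (2 * Real.sqrt (Real.log (2 ^ (n+1)))) := by gcongr
    _ = _ := by ring
end
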